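/- Every barbed simple polygon in the plane can be convexified by a motion that remains entirely within its plane: there is a continuous, simplicity-preserving, edge-length-preserving deformation, with all intermediate configurations lying in the same plane, whose final configuration is a convex polygon. -/

import Mathlib

noncomputable section

/-- The Euclidean plane. -/
abbrev E2 := EuclideanSpace ℝ (Fin 2)

/-- `v 0, …, v (n-1)` is a simple closed polygonal chain (simple polygon) in ℝ²:
`n ≥ 3`, the vertices are pairwise distinct, and two edges `[v i, v ((i+1) % n)]`,
`[v j, v ((j+1) % n)]` (for `i < j < n`) are disjoint unless they are cyclically
consecutive, in which case they meet exactly in their common vertex. -/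
def IsSimplePolygon (n : ℕ) (v : ℕ → E2) : Prop :=
  3 ≤ n ∧
  (∀ i j, i < n → j < n → i ≠ j → v i ≠ v j) ∧
  (∀ i j, i < j → j < n →
    segment ℝ (v i) (v ((i + 1) % n)) ∩ segment ℝ (v j) (v ((j + 1) % n)) =
      if i + 1 = j then {v j}
      else if i = 0 ∧ j = n - 1 then {v 0}
      else ∅)

/-- The boundary of the polygon `v 0, …, v (n-1)`: the union of its edges. -/
def polygonBoundary (n : ℕ) (v : ℕ → E2) : Set E2 :=
  {x | ∃ i, i < n ∧ x ∈ segment ℝ (v i) (v ((i + 1) % n))}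

/-- The interior of the simple polygon `v 0, …, v (n-1)`: the points not on the
boundary whose connected component in the complement of the boundary is bounded. -/
def polygonInterior (n : ℕ) (v : ℕ → E2) : Set E2 :=
  {x | x ∉ polygonBoundary n v ∧
    Bornology.IsBounded (connectedComponentIn (polygonBoundary n v)ᶜ x)}

/-- The configuration `w 0, …, w (n-1)` in ℝ² is a convex polygon: the vertices are
in strictly convex position (no vertex is in the convex hull of the others) and the
cyclic order of the chain agrees with the order of the vertices along the boundary
of their convex hull: each edge lies on a supporting line of the configuration,
with all other vertices strictly on one side. -/
def IsConvexPolygonConfig (n : ℕ) (w : ℕ → E2) : Prop :=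
  (∀ i, i < n → w i ∉ convexHull ℝ {x | ∃ j, j < n ∧ j ≠ i ∧ x = w j}) ∧
  (∀ i, i < n → ∃ f : E2 →ₗ[ℝ] ℝ,
    f (w i) = f (w ((i + 1) % n)) ∧
    ∀ j, j < n → j ≠ i → j ≠ (i + 1) % n → f (w j) < f (w i))

/-- The simple polygon `v 0, …, v (n-1)` is barbed: it has an ear `v i` (a vertex
such that the open segment joining its cyclic neighbours lies in the interior of
the polygon) whose removal (replacing the two edges at `v i` by the single segment
joining its neighbours) yields a convex polygon. -/
def IsBarbed (n : ℕ) (v : ℕ → E2) : Prop :=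
  ∃ i, i < n ∧
    openSegment ℝ (v ((i + n - 1) % n)) (v ((i + 1) % n)) ⊆ polygonInterior n v ∧
    IsConvexPolygonConfig (n - 1) (fun j => if j < i then v j else v (j + 1))

/-- A planar motion of the polygon `v 0, …, v (n-1)`: a continuous family of
configurations in ℝ² over `[0,1]`, starting at `v`, remaining a simple polygon at
all times, and preserving all edge lengths. -/
def IsPlanarMotion (n : ℕ) (v : ℕ → E2) (γ : ℝ → ℕ → E2) : Prop :=
  (∀ i, i < n → ContinuousOn (fun t => γ t i) (Set.Icc 0 1)) ∧
  (∀ i, i < n → γ 0 i = v i) ∧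
  (∀ t ∈ Set.Icc (0 : ℝ) 1, IsSimplePolygon n (γ t)) ∧
  (∀ t ∈ Set.Icc (0 : ℝ) 1, ∀ i, i < n →
    ‖γ t ((i + 1) % n) - γ t i‖ = ‖v ((i + 1) % n) - v i‖)

/-!
Place the convex polygon that remains after removing the ear below a horizontal base, with the apex
of the ear above. Describe the edge directions of the convex chain below the base by the tangents
`u i` of half their angles. The maps `u ↦ (u - c) / y` with `y ≥ 1` keep these tangents in order, so
that the chain stays convex, and flatten it as `y` grows. For each `y` there is a shift `c` keeping
both ends of the chain at the same height. With `(c, y)` regarded as a point of the hyperbolic upper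
half-plane and the `u i` as ideal points, the vector from one end of the chain to the other is the
gradient of a positive combination of Busemann functions; their convexity along geodesics makes `c`
a continuous function of `y` and keeps the base at least as long as it was at the start.

The triangle of the ear, with its two sides of fixed length, therefore persists until the base
becomes as long as both sides together. If this happens, the apex sinks to the base; otherwise the
chain straightens as `y` tends to infinity. In both cases the polygon becomes convex on the way.
-/

open Filter Set Topology

/-! ### Supporting functionals and cross products in the plane -/

theorem eq_left_of_mem_segment {𝕜 E : Type*} [Field 𝕜] [LinearOrder 𝕜] [IsStrictOrderedRing 𝕜]
    [AddCommGroup E] [Module 𝕜 E] (f : E →ₗ[𝕜] 𝕜) {x y z : E} (hz : z ∈ segment 𝕜 x y)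
    (hxy : f x < f y) (hzx : f z ≤ f x) : z = x := by
  obtain ⟨t, ⟨ht, -⟩, rfl⟩ := (segment_eq_image' 𝕜 x y).subset hz
  have hfz : f (x + t • (y - x)) = f x + t * (f y - f x) := by simp
  have ht0 : t ≤ 0 := nonpos_of_mul_nonpos_left (by linarith) (sub_pos.2 hxy)
  simp [le_antisymm ht0 ht]

theorem le_of_mem_segment {𝕜 E : Type*} [Field 𝕜] [LinearOrder 𝕜] [IsStrictOrderedRing 𝕜]
    [AddCommGroup E] [Module 𝕜 E] (f : E →ₗ[𝕜] 𝕜) {c : 𝕜} {x y z : E} (hz : z ∈ segment 𝕜 x y)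
    (hx : f x ≤ c) (hy : f y ≤ c) : f z ≤ c :=
  (convex_halfSpace_le f.isLinear c).segment_subset hx hy hz

theorem not_isBounded_connectedComponentIn_compl {E : Type*} [NormedAddCommGroup E]
    [NormedSpace ℝ E] {f : E →L[ℝ] ℝ} (hf : f ≠ 0) {S : Set E} {m : E} (hm : m ∉ S)
    (hS : ∀ z ∈ S, f z ≤ f m) : ¬ Bornology.IsBounded (connectedComponentIn Sᶜ m) := by
  obtain ⟨g, hg⟩ : ∃ g, f g = 1 := by
    obtain ⟨x, hx⟩ := DFunLike.ne_iff.1 hf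
    exact ⟨(f x)⁻¹ • x, by simpa using inv_mul_cancel₀ hx⟩
  have hfr : ∀ t : ℝ, f (m + t • g) = f m + t := fun t => by simp [hg]
  have hray : (fun t : ℝ => m + t • g) '' Ici 0 ⊆ connectedComponentIn Sᶜ m := by
    refine (isPreconnected_Ici.image _ (by fun_prop)).subset_connectedComponentIn
      ⟨0, self_mem_Ici, by simp⟩ ?_
    rintro _ ⟨t, ht : 0 ≤ t, rfl⟩ hmem
    have ht0 : t = 0 := le_antisymm (by linarith [hS _ hmem, hfr t]) ht
    exact hm (by simpa [ht0] using hmem)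
  intro hb
  refine not_bddAbove_Ici (f m) (((f.lipschitz.isBounded_image hb).bddAbove).mono ?_)
  intro s (hs : f m ≤ s)
  exact ⟨m + (s - f m) • g, hray ⟨s - f m, sub_nonneg.2 hs, rfl⟩, by rw [hfr]; ring⟩

/-- The cross product of two plane vectors; `0 < planeCross a b` says that `b` points to the left of
`a`. -/
def planeCross : E2 →ₗ[ℝ] E2 →ₗ[ℝ] ℝ :=
  LinearMap.mk₂ ℝ (fun a b => a 0 * b 1 - a 1 * b 0)
    (fun _ _ _ => by simp only [PiLp.add_apply]; ring)
    (fun _ _ _ => by simp only [PiLp.smul_apply, smul_eq_mul]; ring)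
    (fun _ _ _ => by simp only [PiLp.add_apply]; ring)
    (fun _ _ _ => by simp only [PiLp.smul_apply, smul_eq_mul]; ring)

theorem planeCross_apply (a b : E2) : planeCross a b = a 0 * b 1 - a 1 * b 0 := rfl

theorem planeCross_self (a : E2) : planeCross a a = 0 := by
  rw [planeCross_apply]; ring

theorem planeCross_smul_add_smul_add_smul (a b c : E2) :
    planeCross a b • c + planeCross b c • a + planeCross c a • b = 0 := by
  ext i
  fin_cases i <;> simp [planeCross_apply] <;> ring

theorem planeCross_flip (a b : E2) : planeCross b a = -planeCross a b := by
  rw [planeCross_apply, planeCross_apply]; ring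

theorem plane_norm_sq (z : E2) : ‖z‖ ^ 2 = z 0 ^ 2 + z 1 ^ 2 := by
  rw [EuclideanSpace.real_norm_sq_eq, Fin.sum_univ_two]

theorem plane_norm_eq {z : E2} {r : ℝ} (hr : 0 ≤ r) (h : z 0 ^ 2 + z 1 ^ 2 = r ^ 2) : ‖z‖ = r := by
  rwa [← plane_norm_sq, sq_eq_sq₀ (norm_nonneg z) hr] at h

theorem planeCross_pos_of_support {f : E2 →ₗ[ℝ] ℝ} {e x y : E2} (he : f e = 0)
    (hx : f x < 0) (hy : f y < 0) (hex : 0 < planeCross e x) : 0 < planeCross e y := by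
  have h := congrArg f (planeCross_smul_add_smul_add_smul e x y)
  simp only [map_add, map_smul, smul_eq_mul, he, map_zero, planeCross_flip e y] at h
  refine pos_of_mul_neg_left (b := f x) ?_ hx.le
  linarith [mul_neg_of_pos_of_neg hex hy]

theorem planeCross_mul_neg_of_support (f : E2 →ₗ[ℝ] ℝ) {e x y : E2} (hx : f x ≤ 0) (hy : 0 < f y)
    (hex : 0 ≤ planeCross e x) (hey : 0 < planeCross e y) (hne : f x < 0 ∨ 0 < planeCross e x) :
    planeCross x y * f e < 0 := by
  have h := congrArg f (planeCross_smul_add_smul_add_smul e x y)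
  simp only [map_add, map_smul, smul_eq_mul, map_zero, planeCross_flip e y] at h
  rcases hne with hx' | hex'
  · linarith [mul_neg_of_pos_of_neg hey hx', mul_nonneg hex hy.le]
  · linarith [mul_nonpos_of_nonneg_of_nonpos hey.le hx, mul_pos hex' hy]

theorem planeCross_eq_of_mem_segment {a b z : E2} (hz : z ∈ segment ℝ a b) :
    planeCross (b - a) z = planeCross (b - a) a := by
  obtain ⟨t, -, rfl⟩ := (segment_eq_image' ℝ a b).subset hz
  simp only [map_add, map_smul, planeCross_self, smul_zero, add_zero]

theorem planeCross_sub_sub_right (a b z : E2) :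
    planeCross (b - a) (z - b) = planeCross (b - a) (z - a) := by
  rw [map_sub (planeCross _), map_sub (planeCross _),
    planeCross_eq_of_mem_segment (right_mem_segment ℝ _ _)]

theorem exists_linearIsometryEquiv_snd_eq {E : Type*} [NormedAddCommGroup E]
    [InnerProductSpace ℝ E] [FiniteDimensional ℝ E] (hE : Module.finrank ℝ E = 2)
    {f : StrongDual ℝ E} (hf : f ≠ 0) {d : E} (hd : d ≠ 0) (hfd : f d = 0) :
    ∃ R : E ≃ₗᵢ[ℝ] E2, 0 < R d 0 ∧ R d 1 = 0 ∧ ∃ c > 0, ∀ z, f z = c * R z 1 := by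
  set g : E := (InnerProductSpace.toDual ℝ E).symm f
  have hfg : ∀ z, f z = inner ℝ g z := fun z => (InnerProductSpace.toDual_symm_apply).symm
  have hg : g ≠ 0 := by simpa [g] using hf
  have hd' := norm_pos_iff.2 hd
  have hg' := norm_pos_iff.2 hg
  have hdg : inner ℝ d g = (0 : ℝ) := by rw [real_inner_comm, ← hfg, hfd]
  have hon : Orthonormal ℝ ![‖d‖⁻¹ • d, ‖g‖⁻¹ • g] := by
    simp [orthonormal_vecCons_iff, norm_smul, hd'.ne', hg'.ne', inner_smul_left, inner_smul_right,
      hdg]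
  have hcard : Fintype.card (Fin 2) = Module.finrank ℝ E := by rw [hE, Fintype.card_fin]
  obtain ⟨b, hb⟩ : ∃ b : OrthonormalBasis (Fin 2) ℝ E, ⇑b = ![‖d‖⁻¹ • d, ‖g‖⁻¹ • g] :=
    ⟨(basisOfOrthonormalOfCardEqFinrank hon hcard).toOrthonormalBasis
      (by rwa [coe_basisOfOrthonormalOfCardEqFinrank]), by simp⟩
  have hb0 : ∀ z, b.repr z 0 = ‖d‖⁻¹ * inner ℝ d z := fun z => by
    simp [hb, OrthonormalBasis.repr_apply_apply, inner_smul_left]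
  have hb1 : ∀ z, b.repr z 1 = ‖g‖⁻¹ * inner ℝ g z := fun z => by
    simp [hb, OrthonormalBasis.repr_apply_apply, inner_smul_left]
  refine ⟨b.repr, ?_, ?_, ‖g‖, hg', fun z => ?_⟩
  · rw [hb0, real_inner_self_eq_norm_sq]
    positivity
  · rw [hb1, ← hfg, hfd, mul_zero]
  · rw [hb1, hfg, mul_inv_cancel_left₀ hg'.ne']

/-! ### Polygons with supporting edges -/

theorem exists_add_mod_eq {n i : ℕ} (s : ℕ) (hi : i < n) : ∃ j < n, (j + s) % n = i := by
  have hs : s % n < n := Nat.mod_lt _ (by omega)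
  refine ⟨(i + (n - s % n)) % n, Nat.mod_lt _ (by omega), ?_⟩
  have e : i + (n - s % n) + s = i + n * (1 + s / n) := by
    have := Nat.mod_add_div s n
    rw [mul_add, mul_one]
    omega
  rw [Nat.mod_add_mod, e, Nat.add_mul_mod_self_left, Nat.mod_eq_of_lt hi]

theorem add_mod_injOn (n s : ℕ) : InjOn (fun j => (j + s) % n) (Iio n) := fun i hi j hj h => by
  have := Nat.ModEq.add_right_cancel' s h
  rwa [Nat.ModEq, Nat.mod_eq_of_lt hi, Nat.mod_eq_of_lt hj] at this

theorem add_mod_ne_self {n s : ℕ} (hs : 0 < s) (hsn : s < n) (i : ℕ) : (i + s) % n ≠ i :=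
  fun h => by
  have hi : i < n := h ▸ Nat.mod_lt _ (by omega)
  refine hs.ne' (add_mod_injOn n i hsn (hs.trans hsn) ?_)
  change (s + i) % n = (0 + i) % n
  rw [add_comm s, h, zero_add, Nat.mod_eq_of_lt hi]

theorem succ_add_mod (n s i : ℕ) : ((i + 1) % n + s) % n = ((i + s) % n + 1) % n := by
  rw [Nat.mod_add_mod, Nat.mod_add_mod, Nat.add_right_comm]

/-- The edge of the polygon `v 0, …, v (n-1)` starting at `v i`. -/
def polygonEdge (n : ℕ) (v : ℕ → E2) (i : ℕ) : Set E2 :=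
  segment ℝ (v i) (v ((i + 1) % n))

theorem IsSimplePolygon.eq_of_mem_polygonEdge {n : ℕ} {v : ℕ → E2} (h : IsSimplePolygon n v)
    {i j : ℕ} (hi : i < n) (hj : j < n) (hij : i ≠ j) {z : E2} (hzi : z ∈ polygonEdge n v i)
    (hzj : z ∈ polygonEdge n v j) :
    ((i + 1) % n = j ∧ z = v j) ∨ ((j + 1) % n = i ∧ z = v i) := by
  wlog hlt : i < j generalizing i j
  · exact (this hj hi hij.symm hzj hzi (by omega)).symm
  have hz := (h.2.2 i j hlt hj).subset ⟨hzi, hzj⟩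
  split_ifs at hz with h1 h2
  · exact Or.inl ⟨by rw [h1, Nat.mod_eq_of_lt hj], hz⟩
  · obtain ⟨rfl, rfl⟩ := h2
    exact Or.inr ⟨by rw [Nat.sub_add_cancel hi, Nat.mod_self], hz⟩
  · exact hz.elim

theorem isSimplePolygon_iff {n : ℕ} {v : ℕ → E2} :
    IsSimplePolygon n v ↔ 3 ≤ n ∧ InjOn v (Iio n) ∧
      ∀ i < n, ∀ j < n, i ≠ j → ∀ z ∈ polygonEdge n v i, z ∈ polygonEdge n v j →
        ((i + 1) % n = j ∧ z = v j) ∨ ((j + 1) % n = i ∧ z = v i) := by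
  refine ⟨fun h => ⟨h.1, fun i hi j hj => not_imp_not.1 (h.2.1 i j hi hj),
    fun i hi j hj hij z => h.eq_of_mem_polygonEdge hi hj hij⟩, ?_⟩
  rintro ⟨hn, hinj, hedges⟩
  refine ⟨hn, fun i j hi hj hij h => hij (hinj hi hj h), fun i j hij hj => ?_⟩
  have hlast : (n - 1 + 1) % n = 0 := by rw [Nat.sub_add_cancel (by omega), Nat.mod_self]
  have hmem : ∀ z ∈ polygonEdge n v i ∩ polygonEdge n v j,
      (i + 1 = j ∧ z = v j) ∨ (i = 0 ∧ j = n - 1 ∧ z = v 0) := fun z ⟨hzi, hzj⟩ => by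
    rcases hedges i (hij.trans hj) j hj hij.ne z hzi hzj with ⟨h, hz⟩ | ⟨h, hz⟩
    · rw [Nat.mod_eq_of_lt (by omega)] at h
      exact Or.inl ⟨h, hz⟩
    · obtain rfl : j = n - 1 := by
        by_contra hjn
        rw [Nat.mod_eq_of_lt (by omega)] at h
        omega
      obtain rfl : 0 = i := hlast.symm.trans h
      exact Or.inr ⟨rfl, rfl, hz⟩
  split_ifs with h1 h2
  · refine Subset.antisymm (fun z hz => ((hmem z hz).resolve_right (by omega)).2) ?_
    rintro _ rfl
    rw [h1, Nat.mod_eq_of_lt hj]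
    exact ⟨right_mem_segment _ _ _, left_mem_segment _ _ _⟩
  · obtain ⟨rfl, rfl⟩ := h2
    refine Subset.antisymm (fun z hz => ((hmem z hz).resolve_left (by omega)).2.2) ?_
    rintro _ rfl
    rw [hlast]
    exact ⟨left_mem_segment _ _ _, right_mem_segment _ _ _⟩
  · refine eq_empty_of_forall_notMem fun z hz => ?_
    rcases hmem z hz with ⟨h, -⟩ | ⟨h0, hj', -⟩
    exacts [h1 h, h2 ⟨h0, hj'⟩]

/-- Each edge of `w 0, …, w (n-1)` lies on a supporting line of the vertices that touches no other
vertex. -/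
def HasSupportingEdges (n : ℕ) (w : ℕ → E2) : Prop :=
  ∀ i < n, ∃ f : E2 →ₗ[ℝ] ℝ, f (w i) = f (w ((i + 1) % n)) ∧
    ∀ j < n, j ≠ i → j ≠ (i + 1) % n → f (w j) < f (w i)

-- At a vertex, the sum of the functionals supporting its two edges is maximal there only.
theorem isConvexPolygonConfig_iff_hasSupportingEdges {n : ℕ} {w : ℕ → E2} (hn : 3 ≤ n) :
    IsConvexPolygonConfig n w ↔ HasSupportingEdges n w := by
  refine ⟨fun h => h.2, fun h => ⟨fun i hi hmem => ?_, h⟩⟩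
  obtain ⟨q, hq, hqi⟩ := exists_add_mod_eq 1 hi
  have hqn : q ≠ (i + 1) % n := by
    rintro rfl
    rw [Nat.mod_add_mod] at hqi
    exact add_mod_ne_self two_pos hn i hqi
  obtain ⟨f, hfi, hf⟩ := h i hi
  obtain ⟨g, hgi, hg⟩ := h q hq
  rw [hqi] at hgi hg
  have hsub : convexHull ℝ {x | ∃ j, j < n ∧ j ≠ i ∧ x = w j} ⊆
      {z | (f + g) z < (f + g) (w i)} := by
    refine convexHull_min ?_ (convex_halfSpace_lt (f + g).isLinear _)
    rintro _ ⟨j, hj, hji, rfl⟩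
    change f (w j) + g (w j) < f (w i) + g (w i)
    by_cases hjn : j = (i + 1) % n
    · have := hg j hj (fun h => hqn (h ▸ hjn)) hji
      subst hjn
      linarith
    · have := hf j hj hji hjn
      by_cases hjq : j = q
      · subst hjq
        linarith
      · linarith [hg j hj hjq hji]
  exact lt_irrefl ((f + g) (w i)) (hsub hmem)

theorem hasSupportingEdges_of_left {n : ℕ} {w : ℕ → E2}
    (h : ∀ i < n, ∀ j < n, j ≠ i → j ≠ (i + 1) % n →
      0 < planeCross (w ((i + 1) % n) - w i) (w j - w i)) : HasSupportingEdges n w := by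
  refine fun i hi => ⟨-planeCross (w ((i + 1) % n) - w i), ?_, fun j hj hji hjn => ?_⟩
  · simpa only [LinearMap.neg_apply, neg_inj] using
      (planeCross_eq_of_mem_segment (right_mem_segment ℝ _ _)).symm
  · simpa only [LinearMap.neg_apply, neg_lt_neg_iff, map_sub, sub_pos] using h i hi j hj hji hjn

namespace HasSupportingEdges

variable {n : ℕ} {v w : ℕ → E2}

theorem congr (h : HasSupportingEdges n w) (hvw : ∀ j < n, v j = w j) :
    HasSupportingEdges n v := fun i hi => by
  obtain ⟨f, hfi, hf⟩ := h i hi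
  refine ⟨f, by rwa [hvw i hi, hvw _ (Nat.mod_lt _ (by omega))], fun j hj hji hjn => ?_⟩
  rw [hvw i hi, hvw j hj]
  exact hf j hj hji hjn

theorem injOn (h : HasSupportingEdges n w) (hn : 3 ≤ n) : InjOn w (Iio n) := by
  intro i hi j hj hij
  by_contra hne
  by_cases hji : j = (i + 1) % n
  · obtain ⟨f, -, hf⟩ := h j hj
    refine (hf i hi hne fun hi' => ?_).ne (congrArg f hij)
    rw [hji, Nat.mod_add_mod] at hi'
    exact add_mod_ne_self two_pos hn i hi'.symm
  · obtain ⟨f, -, hf⟩ := h i hi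
    exact (hf j hj (Ne.symm hne) hji).ne (congrArg f hij.symm)

theorem eq_of_mem_polygonEdge_succ (h : HasSupportingEdges n w) (hn : 3 ≤ n) {i : ℕ} (hi : i < n)
    {z : E2} (hzi : z ∈ polygonEdge n w i) (hzj : z ∈ polygonEdge n w ((i + 1) % n)) :
    z = w ((i + 1) % n) := by
  obtain ⟨f, hfi, hf⟩ := h i hi
  have hz : f (w i) ≤ f z := (convex_halfSpace_ge f.isLinear _).segment_subset
    (le_refl (f (w i))) hfi.le hzi
  rw [polygonEdge, Nat.mod_add_mod] at hzj
  refine eq_left_of_mem_segment (-f) hzj (neg_lt_neg ?_) (neg_le_neg (hfi ▸ hz))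
  refine hfi ▸ hf _ (Nat.mod_lt _ (by omega)) (add_mod_ne_self two_pos hn i) fun h' => ?_
  rw [← Nat.mod_add_mod] at h'
  exact add_mod_ne_self one_pos (by omega) _ h'

theorem notMem_polygonEdge (h : HasSupportingEdges n w) {i j : ℕ} (hi : i < n) (hj : j < n)
    (hij : i ≠ j) (hij' : (i + 1) % n ≠ j) (hji' : (j + 1) % n ≠ i) {z : E2}
    (hzi : z ∈ polygonEdge n w i) : z ∉ polygonEdge n w j := fun hzj => by
  obtain ⟨f, hfi, hf⟩ := h i hi
  have hz : f (w i) ≤ f z := (convex_halfSpace_ge f.isLinear _).segment_subset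
    (le_refl (f (w i))) hfi.le hzi
  have hjs : f (w ((j + 1) % n)) < f (w i) :=
    hf _ (Nat.mod_lt _ (by omega)) hji' ((add_mod_injOn n 1).ne hj hi hij.symm)
  exact hz.not_gt ((convex_halfSpace_lt f.isLinear _).segment_subset
    (hf j hj hij.symm hij'.symm) hjs hzj)

theorem isSimplePolygon (h : HasSupportingEdges n w) (hn : 3 ≤ n) : IsSimplePolygon n w := by
  refine isSimplePolygon_iff.2 ⟨hn, h.injOn hn, fun i hi j hj hij z hzi hzj => ?_⟩
  by_cases hij' : (i + 1) % n = j
  · subst hij'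
    exact Or.inl ⟨rfl, h.eq_of_mem_polygonEdge_succ hn hi hzi hzj⟩
  by_cases hji' : (j + 1) % n = i
  · subst hji'
    exact Or.inr ⟨rfl, h.eq_of_mem_polygonEdge_succ hn hj hzj hzi⟩
  exact absurd hzj (h.notMem_polygonEdge hi hj hij hij' hji' hzi)

end HasSupportingEdges

/-! ### Convexifiable polygons -/

/-- The polygon `w 0, …, w (n-1)` can be convexified in its plane. -/
def IsConvexifiable (n : ℕ) (w : ℕ → E2) : Prop :=
  ∃ γ : ℝ → ℕ → E2, IsPlanarMotion n w γ ∧ IsConvexPolygonConfig n (γ 1)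

theorem IsPlanarMotion.three_le {n : ℕ} {w : ℕ → E2} {γ : ℝ → ℕ → E2}
    (h : IsPlanarMotion n w γ) : 3 ≤ n :=
  (h.2.2.1 0 (left_mem_Icc.2 zero_le_one)).1

theorem IsConvexifiable.congr {n : ℕ} {v w : ℕ → E2} (h : IsConvexifiable n w)
    (hvw : ∀ j < n, v j = w j) : IsConvexifiable n v := by
  obtain ⟨γ, ⟨hcont, hstart, hsimple, hlen⟩, hconv⟩ := h
  refine ⟨γ, ⟨hcont, fun i hi => (hstart i hi).trans (hvw i hi).symm, hsimple,
    fun t ht i hi => ?_⟩, hconv⟩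
  rw [hlen t ht i hi, hvw i hi, hvw _ (Nat.mod_lt _ (by omega))]

theorem isConvexifiable_of_path {n : ℕ} {a b : ℝ} (hab : a ≤ b) {P : ℝ → ℕ → E2}
    (hcont : ∀ i < n, ContinuousOn (fun t => P t i) (Icc a b))
    (hsimple : ∀ t ∈ Icc a b, IsSimplePolygon n (P t))
    (hlen : ∀ t ∈ Icc a b, ∀ i < n,
      ‖P t ((i + 1) % n) - P t i‖ = ‖P a ((i + 1) % n) - P a i‖)
    (hconv : HasSupportingEdges n (P b)) : IsConvexifiable n (P a) := by
  set τ : ℝ → ℝ := fun t => a + t * (b - a)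
  have hτ : MapsTo τ (Icc 0 1) (Icc a b) := fun t ht =>
    ⟨le_add_of_nonneg_right (mul_nonneg ht.1 (sub_nonneg.2 hab)),
      by linarith [mul_le_of_le_one_left (sub_nonneg.2 hab) ht.2, (rfl : τ t = a + t * (b - a))]⟩
  have hτ1 : τ 1 = b := by simp [τ]
  refine ⟨fun t => P (τ t), ⟨fun i hi => (hcont i hi).comp (by fun_prop) hτ,
    fun i _ => by simp [τ], fun t ht => hsimple _ (hτ ht), fun t ht => hlen _ (hτ ht)⟩, ?_⟩
  have hb := hsimple b (right_mem_Icc.2 hab)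
  simpa only [hτ1, isConvexPolygonConfig_iff_hasSupportingEdges hb.1] using hconv

/-- The polygon `w 0, …, w (n-1)` with its vertices renumbered cyclically to start at `w s`. -/
def rotateVertices (n s : ℕ) (w : ℕ → E2) (j : ℕ) : E2 :=
  w ((j + s) % n)

section rotateVertices

variable {n : ℕ} (s : ℕ) {w : ℕ → E2}

theorem rotateVertices_succ_mod (i : ℕ) :
    rotateVertices n s w ((i + 1) % n) = w (((i + s) % n + 1) % n) := by
  rw [rotateVertices, succ_add_mod]

theorem polygonEdge_rotateVertices (i : ℕ) :
    polygonEdge n (rotateVertices n s w) i = polygonEdge n w ((i + s) % n) := by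
  rw [polygonEdge, rotateVertices_succ_mod]
  rfl

theorem polygonBoundary_rotateVertices :
    polygonBoundary n (rotateVertices n s w) = polygonBoundary n w := by
  ext z
  constructor
  · rintro ⟨i, hi, hz⟩
    exact ⟨(i + s) % n, Nat.mod_lt _ (by omega), (polygonEdge_rotateVertices s i).subset hz⟩
  · rintro ⟨i, hi, hz⟩
    obtain ⟨j, hj, rfl⟩ := exists_add_mod_eq s hi
    exact ⟨j, hj, (polygonEdge_rotateVertices s j).superset hz⟩

theorem polygonInterior_rotateVertices :
    polygonInterior n (rotateVertices n s w) = polygonInterior n w := by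
  rw [polygonInterior, polygonInterior, polygonBoundary_rotateVertices]

theorem IsSimplePolygon.rotate (h : IsSimplePolygon n w) :
    IsSimplePolygon n (rotateVertices n s w) := by
  obtain ⟨hn, hinj, hedges⟩ := isSimplePolygon_iff.1 h
  have lt : ∀ j, j % n < n := fun j => Nat.mod_lt _ (by omega)
  refine isSimplePolygon_iff.2 ⟨hn, hinj.comp (add_mod_injOn n s) fun j _ => lt _,
    fun i hi j hj hij z hzi hzj => ?_⟩
  rw [polygonEdge_rotateVertices] at hzi hzj
  refine (hedges _ (lt _) _ (lt _) ((add_mod_injOn n s).ne hi hj hij) z hzi hzj).imp ?_ ?_ <;>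
  · rintro ⟨h1, h2⟩
    rw [← succ_add_mod] at h1
    exact ⟨add_mod_injOn n s (lt _) (by assumption) h1, h2⟩

theorem HasSupportingEdges.rotate (h : HasSupportingEdges n w) :
    HasSupportingEdges n (rotateVertices n s w) := fun i hi => by
  have lt : ∀ j, j % n < n := fun j => Nat.mod_lt _ (by omega)
  obtain ⟨f, hfi, hf⟩ := h ((i + s) % n) (lt _)
  refine ⟨f, by rwa [rotateVertices_succ_mod], fun j hj hji hjn => hf _ (lt _)
    ((add_mod_injOn n s).ne hj hi hji) ?_⟩
  rw [← succ_add_mod]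
  exact (add_mod_injOn n s).ne hj (lt _) hjn

theorem IsConvexifiable.rotate (h : IsConvexifiable n w) :
    IsConvexifiable n (rotateVertices n s w) := by
  obtain ⟨γ, hγ, hconv⟩ := h
  have hn := hγ.three_le
  obtain ⟨hcont, hstart, hsimple, hlen⟩ := hγ
  have lt : ∀ j, j % n < n := fun j => Nat.mod_lt _ (by omega)
  rw [isConvexPolygonConfig_iff_hasSupportingEdges hn] at hconv
  refine ⟨fun t => rotateVertices n s (γ t), ⟨fun i _ => hcont _ (lt _),
    fun i _ => hstart _ (lt _), fun t ht => (hsimple t ht).rotate s, fun t ht i _ => ?_⟩,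
    (isConvexPolygonConfig_iff_hasSupportingEdges hn).2 (hconv.rotate s)⟩
  simp only [rotateVertices_succ_mod]
  exact hlen t ht _ (lt _)

theorem IsConvexifiable.of_rotate (h : IsConvexifiable n (rotateVertices n s w)) :
    IsConvexifiable n w := by
  obtain ⟨γ, hγ, -⟩ := id h
  have hn := hγ.three_le
  obtain ⟨s', -, hs'⟩ := exists_add_mod_eq s (show 0 < n by omega)
  refine (h.rotate s').congr fun j hj => ?_
  change w j = w (((j + s') % n + s) % n)
  rw [Nat.mod_add_mod, add_assoc, Nat.add_mod, hs', add_zero, Nat.mod_mod, Nat.mod_eq_of_lt hj]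

end rotateVertices

section AffineIsometry

variable {n : ℕ} {w : ℕ → E2}

theorem IsSimplePolygon.map (h : IsSimplePolygon n w) (A : E2 ≃ᵃⁱ[ℝ] E2) :
    IsSimplePolygon n (fun j => A (w j)) := by
  refine ⟨h.1, fun i j hi hj hij e => h.2.1 i j hi hj hij (A.injective e), fun i j hij hj => ?_⟩
  have hseg : ∀ a b : E2, segment ℝ (A a) (A b) = A '' segment ℝ a b := fun a b =>
    (image_segment ℝ A.toAffineEquiv.toAffineMap a b).symm
  rw [hseg, hseg, ← image_inter A.injective, h.2.2 i j hij hj]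
  split_ifs <;> simp

theorem HasSupportingEdges.map (h : HasSupportingEdges n w) (A : E2 ≃ᵃⁱ[ℝ] E2) :
    HasSupportingEdges n (fun j => A (w j)) := fun i hi => by
  obtain ⟨f, hfi, hf⟩ := h i hi
  have hA : ∀ x y : E2, f (A.linearIsometryEquiv.symm (A x)) =
      f x - f y + f (A.linearIsometryEquiv.symm (A y)) := fun x y => by
    have : A x = A.linearIsometryEquiv (x - y) + A y := by simpa using A.map_vadd y (x - y)
    rw [this, map_add, map_add, LinearIsometryEquiv.symm_apply_apply, map_sub]
  refine ⟨f.comp A.linearIsometryEquiv.symm.toLinearEquiv.toLinearMap, ?_, fun j hj hji hjn => ?_⟩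
  · refine (hA (w i) (w ((i + 1) % n))).trans ?_
    rw [hfi, sub_self, zero_add]
    rfl
  · refine (hA (w j) (w i)).trans_lt ?_
    simpa using hf j hj hji hjn

theorem IsConvexifiable.of_map (A : E2 ≃ᵃⁱ[ℝ] E2) (h : IsConvexifiable n fun j => A (w j)) :
    IsConvexifiable n w := by
  obtain ⟨γ, hγ, hconv⟩ := h
  have hn := hγ.three_le
  obtain ⟨hcont, hstart, hsimple, hlen⟩ := hγ
  rw [isConvexPolygonConfig_iff_hasSupportingEdges hn] at hconv
  refine ⟨fun t j => A.symm (γ t j), ⟨fun i hi => A.symm.continuous.comp_continuousOn (hcont i hi),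
    fun i hi => by simp only [hstart i hi, A.symm_apply_apply],
    fun t ht => (hsimple t ht).map A.symm, fun t ht i hi => ?_⟩,
    (isConvexPolygonConfig_iff_hasSupportingEdges hn).2 (hconv.map A.symm)⟩
  have := hlen t ht i hi
  rw [← dist_eq_norm, ← dist_eq_norm] at this ⊢
  rwa [A.symm.dist_map, ← A.dist_map (w _)]

end AffineIsometry

/-! ### Half-angle tangents -/

/-- The unit vector making with the first coordinate axis the angle whose half has tangent `u`.
These are all the unit vectors except `(-1, 0)`, in the order of their argument in `(-π, π)`. -/
def halfTanDir (u : ℝ) : E2 :=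
  !₂[(1 - u ^ 2) / (1 + u ^ 2), 2 * u / (1 + u ^ 2)]

theorem halfTanDir_fst (u : ℝ) : halfTanDir u 0 = (1 - u ^ 2) / (1 + u ^ 2) := rfl

theorem halfTanDir_snd (u : ℝ) : halfTanDir u 1 = 2 * u / (1 + u ^ 2) := rfl

@[fun_prop]
theorem continuous_halfTanDir : Continuous halfTanDir := by
  have h : ∀ u : ℝ, 1 + u ^ 2 ≠ 0 := fun u => by positivity
  refine (PiLp.continuous_toLp 2 _).comp (continuous_pi fun i => ?_)
  fin_cases i
  · exact Continuous.div (by fun_prop) (by fun_prop) h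
  · exact Continuous.div (by fun_prop) (by fun_prop) h

theorem norm_halfTanDir (u : ℝ) : ‖halfTanDir u‖ = 1 := by
  refine plane_norm_eq zero_le_one ?_
  have h : 1 + u ^ 2 ≠ 0 := by positivity
  rw [halfTanDir_fst, halfTanDir_snd]
  field_simp
  ring

theorem planeCross_halfTanDir_zero (z : E2) : planeCross (halfTanDir 0) z = z 1 := by
  simp [planeCross_apply, halfTanDir_fst, halfTanDir_snd]

theorem planeCross_halfTanDir (u v : ℝ) : planeCross (halfTanDir u) (halfTanDir v) =
    (v - u) * (1 + u * v) * (2 / ((1 + u ^ 2) * (1 + v ^ 2))) := by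
  have hu : 1 + u ^ 2 ≠ 0 := by positivity
  have hv : 1 + v ^ 2 ≠ 0 := by positivity
  simp only [planeCross_apply, halfTanDir_fst, halfTanDir_snd]
  field_simp
  ring

theorem planeCross_halfTanDir_pos_iff {u v : ℝ} :
    0 < planeCross (halfTanDir u) (halfTanDir v) ↔ 0 < (v - u) * (1 + u * v) := by
  rw [planeCross_halfTanDir, mul_pos_iff_of_pos_right (by positivity)]

theorem planeCross_halfTanDir_neg_iff {u v : ℝ} :
    planeCross (halfTanDir u) (halfTanDir v) < 0 ↔ (v - u) * (1 + u * v) < 0 := by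
  rw [planeCross_halfTanDir, ← not_le, mul_nonneg_iff_of_pos_right (by positivity), not_le]

theorem planeCross_halfTanDir_pos_of_abs_lt {u : ℝ} {z : E2} (hz : 0 < z 1)
    (h : |z 0 + u * z 1| < ‖z‖) : 0 < planeCross (halfTanDir u) z := by
  have hu : 1 + u ^ 2 ≠ 0 := by positivity
  have hsq : (z 0 + u * z 1) ^ 2 < ‖z‖ ^ 2 := sq_lt_sq.2 (h.trans_le (le_abs_self _))
  have key : z 1 * (1 + u ^ 2) * planeCross (halfTanDir u) z = ‖z‖ ^ 2 - (z 0 + u * z 1) ^ 2 := by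
    rw [plane_norm_sq, planeCross_apply, halfTanDir_fst, halfTanDir_snd]
    field_simp
    ring
  exact pos_of_mul_pos_right (key ▸ sub_pos.2 hsq) (by positivity)

theorem abs_fst_lt_norm {z : E2} (hz : 0 < z 1) : |z 0| < ‖z‖ := by
  refine abs_lt_of_sq_lt_sq ?_ (norm_nonneg z)
  rw [plane_norm_sq, lt_add_iff_pos_right]
  positivity

theorem planeCross_halfTanDir_pos_of_nonpos {u u₀ : ℝ} {z : E2} (hz : 0 < z 1) (hu₀ : u₀ ≤ u)
    (hu : u ≤ 0) (h : 0 < ‖z‖ + z 0 + u₀ * z 1) : 0 < planeCross (halfTanDir u) z := by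
  refine planeCross_halfTanDir_pos_of_abs_lt hz (abs_lt.2 ⟨?_, ?_⟩)
  · linarith [mul_le_mul_of_nonneg_right hu₀ hz.le]
  · linarith [(abs_lt.1 (abs_fst_lt_norm hz)).2, mul_nonpos_of_nonpos_of_nonneg hu hz.le]

theorem planeCross_halfTanDir_pos_of_nonneg {u u₀ : ℝ} {z : E2} (hz : 0 < z 1) (hu₀ : u ≤ u₀)
    (hu : 0 ≤ u) (h : 0 < ‖z‖ - z 0 - u₀ * z 1) : 0 < planeCross (halfTanDir u) z := by
  refine planeCross_halfTanDir_pos_of_abs_lt hz (abs_lt.2 ⟨?_, ?_⟩)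
  · linarith [(abs_lt.1 (abs_fst_lt_norm hz)).1, mul_nonneg hu hz.le]
  · linarith [mul_le_mul_of_nonneg_right hu₀ hz.le]

/-- The tangent of half the angle from the first coordinate axis to the plane vector `e`, provided
that `e` is off the ray where `‖e‖ + e 0` vanishes. -/
def halfTan (e : E2) : ℝ :=
  e 1 / (‖e‖ + e 0)

theorem norm_smul_halfTanDir_halfTan {e : E2} (h : 0 < ‖e‖ + e 0) :
    ‖e‖ • halfTanDir (halfTan e) = e := by
  have hnorm := plane_norm_sq e
  have h' := h.ne'
  have hden : (‖e‖ + e 0) ^ 2 + e 1 ^ 2 ≠ 0 := by positivity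
  ext i
  fin_cases i
  · change ‖e‖ * halfTanDir (halfTan e) 0 = e 0
    rw [halfTanDir_fst, halfTan]
    field_simp
    linear_combination (‖e‖ + e 0) * hnorm
  · change ‖e‖ * halfTanDir (halfTan e) 1 = e 1
    rw [halfTanDir_snd, halfTan]
    field_simp
    linear_combination e 1 * hnorm

theorem norm_add_fst_pos {e : E2} (h : e 1 = 0 → 0 < e 0) : 0 < ‖e‖ + e 0 := by
  by_cases h1 : e 1 = 0
  · linarith [h h1, norm_nonneg e]
  · have : 0 < e 1 ^ 2 := by positivity
    nlinarith [plane_norm_sq e, norm_nonneg e]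

-- The excluded vertical signs are those of a turn at a local maximum of the height.
theorem halfTan_lt_halfTan {e e' : E2} (he : 0 < ‖e‖ + e 0) (he' : 0 < ‖e'‖ + e' 0)
    (hturn : 0 < planeCross e e') (hmax : ¬(0 ≤ e 1 ∧ e' 1 ≤ 0)) : halfTan e < halfTan e' := by
  set u := halfTan e with hu
  set v := halfTan e' with hv
  have huv : 0 < (v - u) * (1 + u * v) := by
    rw [← norm_smul_halfTanDir_halfTan he, ← norm_smul_halfTanDir_halfTan he',
      LinearMap.map_smul₂, map_smul, smul_smul, smul_eq_mul] at hturn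
    exact planeCross_halfTanDir_pos_iff.1 (pos_of_mul_pos_right hturn (by positivity))
  by_contra! hvu
  have huv' : 1 + u * v < 0 := by
    by_contra! h
    exact huv.not_ge (mul_nonpos_of_nonpos_of_nonneg (by linarith) h)
  have hv0 : v < 0 := by nlinarith
  have hu0 : 0 < u := by nlinarith
  refine hmax ⟨((div_pos_iff_of_pos_right he).1 hu0).le, ?_⟩
  rw [← div_mul_cancel₀ (e' 1) he'.ne']
  exact (mul_neg_of_neg_of_pos hv0 he').le

/-! ### Convex arcs -/

/-- The `j`-th vertex of the chain which starts at the origin, with edge lengths `ℓ` and with edge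
directions given by the half-angle tangents `u`. -/
def chain (ℓ u : ℕ → ℝ) (j : ℕ) : E2 :=
  ∑ i ∈ Finset.range j, ℓ i • halfTanDir (u i)

section chain

variable (ℓ u : ℕ → ℝ)

theorem chain_zero : chain ℓ u 0 = 0 := rfl

theorem chain_succ (j : ℕ) : chain ℓ u (j + 1) = chain ℓ u j + ℓ j • halfTanDir (u j) :=
  Finset.sum_range_succ _ _

theorem chain_apply (j : ℕ) (m : Fin 2) :
    chain ℓ u j m = ∑ i ∈ Finset.range j, ℓ i * halfTanDir (u i) m := by
  simp [chain, WithLp.ofLp_sum]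

theorem planeCross_chain_succ (e : E2) (j : ℕ) : planeCross e (chain ℓ u (j + 1)) =
    planeCross e (chain ℓ u j) + ℓ j * planeCross e (halfTanDir (u j)) := by
  rw [chain_succ, map_add, map_smul, smul_eq_mul]

theorem planeCross_chain_succ_self (i : ℕ) : planeCross (halfTanDir (u i)) (chain ℓ u (i + 1)) =
    planeCross (halfTanDir (u i)) (chain ℓ u i) := by
  rw [planeCross_chain_succ, planeCross_self, mul_zero, add_zero]

variable {ℓ u}

theorem strictMonoOn_planeCross_chain {w : ℝ} {a b : ℕ} (hℓ : ∀ m < b, 0 < ℓ m)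
    (h : ∀ m, a ≤ m → m < b → 0 < (u m - w) * (1 + w * u m)) :
    StrictMonoOn (fun j => planeCross (halfTanDir w) (chain ℓ u j)) (Icc a b) := by
  refine strictMonoOn_of_lt_add_one inferInstance fun m _ hm hm' => ?_
  rw [planeCross_chain_succ, lt_add_iff_pos_right]
  exact mul_pos (hℓ m hm'.2) (planeCross_halfTanDir_pos_iff.2 (h m hm.1 hm'.2))

theorem strictAntiOn_planeCross_chain {w : ℝ} {a b : ℕ} (hℓ : ∀ m < b, 0 < ℓ m)
    (h : ∀ m, a ≤ m → m < b → (u m - w) * (1 + w * u m) < 0) :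
    StrictAntiOn (fun j => planeCross (halfTanDir w) (chain ℓ u j)) (Icc a b) := by
  refine strictAntiOn_of_add_one_lt inferInstance fun m _ hm hm' => ?_
  rw [planeCross_chain_succ, add_lt_iff_neg_left]
  exact mul_neg_of_pos_of_neg (hℓ m hm'.2) (planeCross_halfTanDir_neg_iff.2 (h m hm.1 hm'.2))

end chain

/-- The chain `chain ℓ u 0, …, chain ℓ u k` turns left at each of its inner vertices and closes up
over a horizontal base, traversed from left to right. -/
structure IsConvexArc (ℓ u : ℕ → ℝ) (k : ℕ) : Prop where
  length_pos : ∀ i < k, 0 < ℓ i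
  strictMonoOn : StrictMonoOn u (Iio k)
  last_fst : 0 < chain ℓ u k 0
  last_snd : chain ℓ u k 1 = 0

namespace IsConvexArc

variable {ℓ u : ℕ → ℝ} {k : ℕ}

theorem pos (h : IsConvexArc ℓ u k) : 0 < k := by
  by_contra! hk
  obtain rfl : k = 0 := by omega
  exact h.last_fst.ne (by simp [chain_zero])

theorem lt (h : IsConvexArc ℓ u k) {i j : ℕ} (hij : i < j) (hj : j < k) : u i < u j :=
  h.strictMonoOn (hij.trans hj) hj hij

theorem strictMonoOn_height (h : IsConvexArc ℓ u k) {a b : ℕ} (hb : b ≤ k)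
    (hu : ∀ m, a ≤ m → m < b → 0 < u m) : StrictMonoOn (fun j => chain ℓ u j 1) (Icc a b) := by
  simpa only [planeCross_halfTanDir_zero] using strictMonoOn_planeCross_chain (w := 0)
    (fun m hm => h.length_pos m (by omega)) fun m ha hm => by simpa using hu m ha hm

theorem strictAntiOn_height (h : IsConvexArc ℓ u k) {a b : ℕ} (hb : b ≤ k)
    (hu : ∀ m, a ≤ m → m < b → u m < 0) : StrictAntiOn (fun j => chain ℓ u j 1) (Icc a b) := by
  simpa only [planeCross_halfTanDir_zero] using strictAntiOn_planeCross_chain (w := 0)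
    (fun m hm => h.length_pos m (by omega)) fun m ha hm => by simpa using hu m ha hm

theorem first_nonpos (h : IsConvexArc ℓ u k) : u 0 ≤ 0 := by
  by_contra! hu
  have hmono := h.strictMonoOn_height (a := 0) le_rfl fun m _ hm => by
    rcases m.eq_zero_or_pos with rfl | hm0
    exacts [hu, hu.trans (h.lt hm0 hm)]
  refine (hmono (left_mem_Icc.2 (Nat.zero_le k)) (right_mem_Icc.2 (Nat.zero_le k)) h.pos).ne' ?_
  simp [chain_zero, h.last_snd]

theorem last_nonneg (h : IsConvexArc ℓ u k) : 0 ≤ u (k - 1) := by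
  by_contra! hu
  have hanti := h.strictAntiOn_height (a := 0) le_rfl fun m _ hm => by
    rcases (Nat.le_sub_one_of_lt hm).eq_or_lt with rfl | hm'
    exacts [hu, (h.lt hm' (by omega)).trans hu]
  refine (hanti (left_mem_Icc.2 (Nat.zero_le k)) (right_mem_Icc.2 (Nat.zero_le k)) h.pos).ne ?_
  simp [chain_zero, h.last_snd]

theorem below (h : IsConvexArc ℓ u k) {j : ℕ} (hj : 0 < j) (hjk : j < k) :
    chain ℓ u j 1 < 0 := by
  rcases le_or_gt (u j) 0 with huj | huj
  · have hanti := h.strictAntiOn_height (a := 0) hjk.le fun m _ hm => (h.lt hm hjk).trans_le huj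
    simpa [chain_zero] using hanti (left_mem_Icc.2 hj.le) (right_mem_Icc.2 hj.le) hj
  · have hmono := h.strictMonoOn_height (a := j) le_rfl fun m hjm hm => by
      rcases hjm.eq_or_lt with rfl | hjm
      exacts [huj, huj.trans (h.lt hjm hm)]
    simpa [h.last_snd] using hmono (left_mem_Icc.2 hjk.le) (right_mem_Icc.2 hjk.le) hjk

theorem planeCross_last (h : IsConvexArc ℓ u k) (w : ℝ) :
    planeCross (halfTanDir w) (chain ℓ u k) = -(halfTanDir w 1 * chain ℓ u k 0) := by
  rw [planeCross_apply, h.last_snd]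
  ring

-- When the directions turn by at least `π` between the edges `i` and `j - 1`, vertex `j` is reached
-- from vertex `i` the other way round, through the base.
theorem planeCross_lt_of_succ_lt (h : IsConvexArc ℓ u k) {i j : ℕ} (hij : i + 1 < j)
    (hj : j ≤ k) : planeCross (halfTanDir (u i)) (chain ℓ u i) <
      planeCross (halfTanDir (u i)) (chain ℓ u j) := by
  have hℓ : ∀ {b}, b ≤ k → ∀ m < b, 0 < ℓ m := fun hb m hm => h.length_pos m (by omega)
  have hlast : ∀ {m}, m < j → u m ≤ u (j - 1) := fun hm =>
    h.strictMonoOn.monotoneOn (show _ < k by omega) (show _ < k by omega) (Nat.le_sub_one_of_lt hm)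
  rcases lt_or_ge 0 (1 + u i * u (j - 1)) with hpos | hneg
  · have hmono := strictMonoOn_planeCross_chain (a := i + 1) (w := u i) (hℓ hj) fun m him hm => by
      have hum := h.lt him (hm.trans_le hj)
      refine mul_pos (sub_pos.2 hum) ?_
      rcases le_or_gt 0 (u i) with hi | hi
      · nlinarith
      · nlinarith [hlast hm]
    rw [← planeCross_chain_succ_self]
    exact hmono (left_mem_Icc.2 hij.le) (right_mem_Icc.2 hij.le) hij
  · have hi : u i < 0 := by
      by_contra! hi
      nlinarith [hlast (show i < j by omega)]
    have hanti := strictAntiOn_planeCross_chain (a := j) (w := u i) (hℓ le_rfl) fun m hjm hm => by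
      have hum := h.lt (show i < m by omega) hm
      have := h.lt (show j - 1 < m by omega) hm
      exact mul_neg_of_pos_of_neg (sub_pos.2 hum) (by nlinarith)
    have hanti' := strictAntiOn_planeCross_chain (a := 0) (w := u i) (hℓ (show i ≤ k by omega))
      fun m _ hm => by
        have hum := h.lt hm (show i < k by omega)
        exact mul_neg_of_neg_of_pos (sub_neg.2 hum) (by nlinarith)
    calc planeCross (halfTanDir (u i)) (chain ℓ u i)
        ≤ planeCross (halfTanDir (u i)) (chain ℓ u 0) :=
          hanti'.antitoneOn (left_mem_Icc.2 i.zero_le) (right_mem_Icc.2 i.zero_le) i.zero_le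
      _ < planeCross (halfTanDir (u i)) (chain ℓ u k) := by
          rw [h.planeCross_last, chain_zero, map_zero, neg_pos, halfTanDir_snd]
          exact mul_neg_of_neg_of_pos (div_neg_of_neg_of_pos (by linarith) (by positivity))
            h.last_fst
      _ ≤ planeCross (halfTanDir (u i)) (chain ℓ u j) :=
          hanti.antitoneOn (left_mem_Icc.2 hj) (right_mem_Icc.2 hj) hj

theorem planeCross_lt_of_lt (h : IsConvexArc ℓ u k) {i j : ℕ} (hji : j < i) (hi : i < k) :
    planeCross (halfTanDir (u i)) (chain ℓ u i) < planeCross (halfTanDir (u i)) (chain ℓ u j) := by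
  have hℓ : ∀ {b}, b ≤ k → ∀ m < b, 0 < ℓ m := fun hb m hm => h.length_pos m (by omega)
  rcases lt_or_ge 0 (1 + u i * u j) with hpos | hneg
  · have hanti := strictAntiOn_planeCross_chain (a := j) (w := u i) (hℓ hi.le) fun m hjm hm => by
      have hum := h.lt hm hi
      have hujm := h.strictMonoOn.monotoneOn (hji.trans hi) (hm.trans hi) hjm
      refine mul_neg_of_neg_of_pos (sub_neg.2 hum) ?_
      rcases le_or_gt 0 (u i) with hui | hui <;> nlinarith
    exact hanti (left_mem_Icc.2 hji.le) (right_mem_Icc.2 hji.le) hji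
  · have hui : 0 < u i := by
      by_contra! hui
      nlinarith [h.lt hji hi]
    have hmono := strictMonoOn_planeCross_chain (a := 0) (w := u i) (hℓ (show j ≤ k by omega))
      fun m _ hm => by
        have hum := h.lt (hm.trans hji) hi
        have := h.lt hm (hji.trans hi)
        exact mul_pos_of_neg_of_neg (sub_neg.2 hum) (by nlinarith)
    have hmono' := strictMonoOn_planeCross_chain (a := i + 1) (w := u i) (hℓ le_rfl)
      fun m him hm => by
        have hum := h.lt him hm
        exact mul_pos (sub_pos.2 hum) (by nlinarith)
    calc planeCross (halfTanDir (u i)) (chain ℓ u i)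
        ≤ planeCross (halfTanDir (u i)) (chain ℓ u k) := by
          rw [← planeCross_chain_succ_self]
          exact hmono'.monotoneOn (left_mem_Icc.2 hi) (right_mem_Icc.2 hi) hi
      _ < planeCross (halfTanDir (u i)) (chain ℓ u 0) := by
          rw [h.planeCross_last, chain_zero, map_zero, neg_neg_iff_pos, halfTanDir_snd]
          exact mul_pos (by positivity) h.last_fst
      _ ≤ planeCross (halfTanDir (u i)) (chain ℓ u j) :=
          hmono.monotoneOn (left_mem_Icc.2 j.zero_le) (right_mem_Icc.2 j.zero_le) j.zero_le

theorem left_of_edge (h : IsConvexArc ℓ u k) {i j : ℕ} (hi : i < k) (hj : j ≤ k) (hji : j ≠ i)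
    (hji' : j ≠ i + 1) :
    0 < planeCross (chain ℓ u (i + 1) - chain ℓ u i) (chain ℓ u j - chain ℓ u i) := by
  rw [chain_succ, add_sub_cancel_left, LinearMap.map_smul₂, smul_eq_mul, map_sub]
  refine mul_pos (h.length_pos i hi) (sub_pos.2 ?_)
  rcases hji.lt_or_gt with hlt | hgt
  · exact h.planeCross_lt_of_lt hlt hi
  · exact h.planeCross_lt_of_succ_lt (by omega) hj

end IsConvexArc

/-! ### Flattening a convex arc -/

theorem continuousOn_of_sq_dist_le {X Y : Type*} [TopologicalSpace X] [PseudoMetricSpace Y]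
    {f : X → Y} {g : X → ℝ} {s : Set X} (hg : ContinuousOn g s)
    (h : ∀ x ∈ s, ∀ y ∈ s, dist (f x) (f y) ^ 2 ≤ |g x - g y|) : ContinuousOn f s := by
  intro y hy
  rw [ContinuousWithinAt, tendsto_iff_dist_tendsto_zero]
  refine squeeze_zero' (.of_forall fun _ => dist_nonneg)
    (eventually_of_mem self_mem_nhdsWithin fun x hx => Real.le_sqrt_of_sq_le (h x hx y hy)) ?_
  simpa [ContinuousWithinAt] using
    (((hg y hy).sub (continuousWithinAt_const (b := g y))).abs).sqrt

/-- The half-angle tangents `u` after a translation by `-c` and a dilation by `1 / y`; for `y > 1`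
this opens the angles between the directions. -/
def flatten (u : ℕ → ℝ) (c y : ℝ) (i : ℕ) : ℝ :=
  (u i - c) / y

theorem flatten_zero_one (u : ℕ → ℝ) : flatten u 0 1 = u := by
  ext i
  simp [flatten]

-- In the upper half-plane model of the hyperbolic plane, this compares the derivatives, at the ends
-- of the geodesic from `(c₁, y₁)` to `(c₂, y₂)`, of the convex Busemann function at the ideal point
-- `c₁ + y₁ * a = c₂ + y₂ * b`.
theorem busemann_deriv_le (a b y₁ y₂ : ℝ) :
    ((y₁ * a - y₂ * b) ^ 2 + (y₂ ^ 2 - y₁ ^ 2)) * halfTanDir a 0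
        - 2 * (y₁ * a - y₂ * b) * y₁ * halfTanDir a 1 ≤
      ((y₂ ^ 2 - y₁ ^ 2) - (y₁ * a - y₂ * b) ^ 2) * halfTanDir b 0
        - 2 * (y₁ * a - y₂ * b) * y₂ * halfTanDir b 1 := by
  have ha : 1 + a ^ 2 ≠ 0 := by positivity
  have hb : 1 + b ^ 2 ≠ 0 := by positivity
  rw [← sub_nonneg]
  calc (0 : ℝ) ≤ 2 * (a * b * (y₁ * a - y₂ * b) - a * y₂ + b * y₁) ^ 2 /
        ((1 + a ^ 2) * (1 + b ^ 2)) := by positivity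
    _ = _ := by
      simp only [halfTanDir_fst, halfTanDir_snd]
      field_simp
      ring

theorem chain_busemann_deriv_le {ℓ : ℕ → ℝ} {k : ℕ} (hℓ : ∀ i < k, 0 ≤ ℓ i) (u : ℕ → ℝ)
    (c₁ c₂ : ℝ) {y₁ y₂ : ℝ} (hy₁ : y₁ ≠ 0) (hy₂ : y₂ ≠ 0) :
    ((c₂ - c₁) ^ 2 + (y₂ ^ 2 - y₁ ^ 2)) * chain ℓ (flatten u c₁ y₁) k 0
        - 2 * (c₂ - c₁) * y₁ * chain ℓ (flatten u c₁ y₁) k 1 ≤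
      ((y₂ ^ 2 - y₁ ^ 2) - (c₂ - c₁) ^ 2) * chain ℓ (flatten u c₂ y₂) k 0
        - 2 * (c₂ - c₁) * y₂ * chain ℓ (flatten u c₂ y₂) k 1 := by
  simp only [chain_apply, Finset.mul_sum, ← Finset.sum_sub_distrib]
  refine Finset.sum_le_sum fun i hi => ?_
  have hδ : y₁ * flatten u c₁ y₁ i - y₂ * flatten u c₂ y₂ i = c₂ - c₁ := by
    simp only [flatten]
    field_simp
    ring
  have := mul_le_mul_of_nonneg_left
    (busemann_deriv_le (flatten u c₁ y₁ i) (flatten u c₂ y₂ i) y₁ y₂) (hℓ i (Finset.mem_range.1 hi))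
  rw [hδ] at this
  linarith

theorem continuousOn_chain {U : ℝ → ℕ → ℝ} {s : Set ℝ} (ℓ : ℕ → ℝ) (j : ℕ)
    (hU : ∀ i < j, ContinuousOn (fun y => U y i) s) : ContinuousOn (fun y => chain ℓ (U y) j) s :=
  continuousOn_finsetSum _ fun i hi =>
    (continuous_halfTanDir.comp_continuousOn (hU i (Finset.mem_range.1 hi))).const_smul (ℓ i)

namespace IsConvexArc

variable {ℓ u : ℕ → ℝ} {k : ℕ}

theorem of_flatten (h : IsConvexArc ℓ u k) {c y : ℝ} (hy : 0 < y)
    (hfst : 0 < chain ℓ (flatten u c y) k 0) (hsnd : chain ℓ (flatten u c y) k 1 = 0) :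
    IsConvexArc ℓ (flatten u c y) k where
  length_pos := h.length_pos
  strictMonoOn _ hi _ hj hij :=
    div_lt_div_of_pos_right (sub_lt_sub_right (h.strictMonoOn hi hj hij) c) hy
  last_fst := hfst
  last_snd := hsnd

theorem exists_closing_shift (h : IsConvexArc ℓ u k) {y : ℝ} (hy : 1 < y) :
    ∃ c, c ^ 2 ≤ y ^ 2 - 1 ∧ chain ℓ (flatten u c y) k 1 = 0 := by
  have hy0 : 0 < y := by linarith
  have hκ2 : 0 < y ^ 2 - 1 := by nlinarith
  set κ := √(y ^ 2 - 1)
  have hκ : 0 < κ := Real.sqrt_pos.2 hκ2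
  have hκs : κ ^ 2 = y ^ 2 - 1 := Real.sq_sqrt hκ2.le
  have hκX : 0 < κ ^ 2 * chain ℓ u k 0 := mul_pos (by positivity) h.last_fst
  have key : ∀ c, (c ^ 2 + κ ^ 2) * chain ℓ u k 0 ≤ (κ ^ 2 - c ^ 2) * chain ℓ (flatten u c y) k 0
      - 2 * c * y * chain ℓ (flatten u c y) k 1 := fun c => by
    simpa [flatten_zero_one, h.last_snd, hκs] using chain_busemann_deriv_le
      (fun i hi => (h.length_pos i hi).le) u 0 c one_ne_zero hy0.ne'
  have hright : chain ℓ (flatten u κ y) k 1 < 0 := by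
    refine neg_of_mul_neg_right (a := 2 * κ * y) ?_ (by positivity)
    linarith [key κ]
  have hleft : 0 < chain ℓ (flatten u (-κ) y) k 1 := by
    refine pos_of_mul_pos_right (a := 2 * κ * y) ?_ (by positivity)
    linarith [key (-κ)]
  have hcont : ContinuousOn (fun c => chain ℓ (flatten u c y) k) (Icc (-κ) κ) :=
    continuousOn_chain ℓ k fun i _ => by
      unfold flatten
      fun_prop
  obtain ⟨c, hc, hc0⟩ := intermediate_value_Icc' (by linarith)
    ((PiLp.continuous_apply 2 _ 1).comp_continuousOn hcont) (mem_Icc.2 ⟨hright.le, hleft.le⟩)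
  exact ⟨c, hκs ▸ sq_le_sq' hc.1 hc.2, hc0⟩

theorem exists_flatten (h : IsConvexArc ℓ u k) {y : ℝ} (hy : 1 ≤ y) :
    ∃ c, IsConvexArc ℓ (flatten u c y) k ∧ chain ℓ u k 0 ≤ chain ℓ (flatten u c y) k 0 := by
  rcases hy.eq_or_lt with rfl | hy1
  · exact ⟨0, by rwa [flatten_zero_one], by rw [flatten_zero_one]⟩
  have hy0 : 0 < y := by linarith
  obtain ⟨c, hc, hclosed⟩ := h.exists_closing_shift hy1
  have key := chain_busemann_deriv_le (fun i hi => (h.length_pos i hi).le) u 0 c one_ne_zero hy0.ne'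
  simp only [flatten_zero_one, h.last_snd, hclosed, sub_zero, mul_zero, one_pow] at key
  have hX := h.last_fst
  have hle : chain ℓ u k 0 ≤ chain ℓ (flatten u c y) k 0 := by
    have hκ : 0 < c ^ 2 + (y ^ 2 - 1) := by nlinarith [sq_nonneg c]
    have hpos : 0 < y ^ 2 - 1 - c ^ 2 := by
      refine (sub_nonneg.2 hc).lt_of_ne fun h0 => ?_
      rw [← h0, zero_mul] at key
      exact (mul_pos hκ hX).not_ge key
    refine le_of_mul_le_mul_left (le_trans ?_ key) hpos
    exact mul_le_mul_of_nonneg_right (by linarith [sq_nonneg c]) hX.le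
  exact ⟨c, h.of_flatten hy0 (hX.trans_le hle) hclosed, hle⟩

theorem sq_sub_le_of_flatten {c₁ c₂ y₁ y₂ : ℝ} (hy₁ : 0 < y₁) (hy : y₁ ≤ y₂)
    (h₁ : IsConvexArc ℓ (flatten u c₁ y₁) k) (h₂ : IsConvexArc ℓ (flatten u c₂ y₂) k) :
    (c₂ - c₁) ^ 2 ≤ y₂ ^ 2 - y₁ ^ 2 := by
  have key := chain_busemann_deriv_le (fun i hi => (h₁.length_pos i hi).le) u c₁ c₂ hy₁.ne'
    (hy₁.trans_le hy).ne'
  simp only [h₁.last_snd, h₂.last_snd, mul_zero, sub_zero] at key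
  by_contra! hlt
  have hκ : 0 ≤ y₂ ^ 2 - y₁ ^ 2 := by nlinarith
  have := mul_pos (show 0 < (c₂ - c₁) ^ 2 + (y₂ ^ 2 - y₁ ^ 2) by linarith) h₁.last_fst
  have := mul_neg_of_neg_of_pos (sub_neg.2 hlt) h₂.last_fst
  linarith

theorem flatten_bounds {c y : ℝ} (hy : 0 < y) (h : IsConvexArc ℓ (flatten u c y) k) :
    u 0 ≤ c ∧ c ≤ u (k - 1) := by
  have h0 := h.first_nonpos
  have h1 := h.last_nonneg
  simp only [flatten, div_le_iff₀ hy, le_div_iff₀ hy, zero_mul, sub_nonpos, sub_nonneg] at h0 h1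
  exact ⟨h0, h1⟩

theorem exists_flattening (h : IsConvexArc ℓ u k) :
    ∃ U : ℝ → ℕ → ℝ, U 1 = u ∧ (∀ i, ContinuousOn (fun y => U y i) (Ici 1)) ∧
      (∀ y ≥ 1, IsConvexArc ℓ (U y) k ∧ chain ℓ u k 0 ≤ chain ℓ (U y) k 0) ∧
      ∀ i, Tendsto (fun y => U y i) atTop (𝓝 0) := by
  choose! c hc using fun y => h.exists_flatten (y := y)
  have hpos : ∀ y ∈ Ici (1 : ℝ), 0 < y := fun y hy => zero_lt_one.trans_le hy
  have hcont : ContinuousOn c (Ici 1) := by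
    refine continuousOn_of_sq_dist_le (g := fun y => y ^ 2) (by fun_prop) fun x hx y hy => ?_
    wlog hxy : x ≤ y generalizing x y
    · simpa only [dist_comm, abs_sub_comm] using this y hy x hx (by linarith)
    rw [dist_comm, Real.dist_eq, sq_abs, abs_sub_comm]
    exact (sq_sub_le_of_flatten (hpos x hx) hxy (hc x hx).1 (hc y hy).1).trans (le_abs_self _)
  have hc1 : c 1 = 0 := by
    have := sq_sub_le_of_flatten one_pos le_rfl (by rwa [flatten_zero_one]) (hc 1 le_rfl).1
    simpa using this
  refine ⟨fun y => flatten u (c y) y, by simp only [hc1, flatten_zero_one], fun i => ?_, hc,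
    fun i => ?_⟩
  · exact (continuousOn_const.sub hcont).div continuousOn_id fun y hy => (hpos y hy).ne'
  · have hbounds : ∀ᶠ y in atTop, u 0 ≤ c y ∧ c y ≤ u (k - 1) := by
      filter_upwards [eventually_ge_atTop 1] with y hy
      exact flatten_bounds (hpos y hy) (hc y hy).1
    exact tendsto_bdd_div_atTop_nhds_zero (b := u i - u (k - 1)) (B := u i - u 0)
      (hbounds.mono fun y hy => by linarith [hy.2]) (hbounds.mono fun y hy => by linarith [hy.1])
      tendsto_id

end IsConvexArc

/-! ### The apex over a base of varying length -/

/-- The first coordinate of the apex of the triangle above the base from `(0, 0)` to `(d, 0)`, with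
sides `r₁` and `r₂` at the left and right end of the base. -/
def apexX (r₁ r₂ d : ℝ) : ℝ :=
  (d ^ 2 + r₁ ^ 2 - r₂ ^ 2) / (2 * d)

/-- The second coordinate of the apex of the triangle above the base from `(0, 0)` to `(d, 0)`, with
sides `r₁` and `r₂` at the left and right end of the base; `0` when there is no such triangle. -/
def apexY (r₁ r₂ d : ℝ) : ℝ :=
  √(r₁ ^ 2 - apexX r₁ r₂ d ^ 2)

section apex

variable {r₁ r₂ d : ℝ}

theorem apexX_swap (hd : d ≠ 0) : apexX r₂ r₁ d = d - apexX r₁ r₂ d := by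
  unfold apexX
  field_simp
  ring

theorem apexY_swap (hd : d ≠ 0) : apexY r₂ r₁ d = apexY r₁ r₂ d := by
  unfold apexY
  congr 1
  unfold apexX
  field_simp
  ring

theorem four_mul_sq_mul_sq_sub_apexX_sq (hd : d ≠ 0) : 4 * d ^ 2 * (r₁ ^ 2 - apexX r₁ r₂ d ^ 2) =
    ((r₁ + r₂) ^ 2 - d ^ 2) * (d ^ 2 - (r₁ - r₂) ^ 2) := by
  unfold apexX
  field_simp
  ring

theorem apexY_pos_iff (hr₁ : 0 ≤ r₁) (hr₂ : 0 ≤ r₂) (hd : 0 < d) :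
    0 < apexY r₁ r₂ d ↔ |r₁ - r₂| < d ∧ d < r₁ + r₂ := by
  have hdiff : |r₁ - r₂| < d ↔ 0 < d ^ 2 - (r₁ - r₂) ^ 2 := by
    rw [sub_pos, sq_lt_sq, abs_of_pos hd]
  have hsum : d < r₁ + r₂ ↔ 0 < (r₁ + r₂) ^ 2 - d ^ 2 := by
    rw [sub_pos, sq_lt_sq₀ hd.le (add_nonneg hr₁ hr₂)]
  rw [apexY, Real.sqrt_pos, ← mul_pos_iff_of_pos_left (show 0 < 4 * d ^ 2 by positivity),
    four_mul_sq_mul_sq_sub_apexX_sq hd.ne', hdiff, hsum]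
  refine ⟨fun h => ?_, fun h => mul_pos h.2 h.1⟩
  rcases mul_pos_iff.1 h with h | h
  · exact h.symm
  · linarith [mul_nonneg hr₁ hr₂]

theorem apexY_eq_zero (hr₁ : 0 ≤ r₁) (hr₂ : 0 ≤ r₂) (hd : 0 < d) (hd' : r₁ + r₂ ≤ d) :
    apexY r₁ r₂ d = 0 :=
  (Real.sqrt_nonneg _).antisymm' (not_lt.1 fun h => hd'.not_gt ((apexY_pos_iff hr₁ hr₂ hd).1 h).2)

theorem apexX_sq_add_apexY_sq (h : 0 < apexY r₁ r₂ d) :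
    apexX r₁ r₂ d ^ 2 + apexY r₁ r₂ d ^ 2 = r₁ ^ 2 := by
  rw [apexY, Real.sq_sqrt (Real.sqrt_pos.1 h).le, add_sub_cancel]

theorem apexY_le (hr : 0 ≤ r₁) : apexY r₁ r₂ d ≤ r₁ :=
  Real.sqrt_le_iff.2 ⟨hr, sub_le_self _ (sq_nonneg _)⟩

theorem apexX_eq {x y : ℝ} (hd : d ≠ 0) (h₁ : x ^ 2 + y ^ 2 = r₁ ^ 2)
    (h₂ : (x - d) ^ 2 + y ^ 2 = r₂ ^ 2) : apexX r₁ r₂ d = x := by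
  rw [apexX, ← h₁, ← h₂]
  field_simp
  ring

theorem apexY_eq {x y : ℝ} (hd : d ≠ 0) (hy : 0 ≤ y) (h₁ : x ^ 2 + y ^ 2 = r₁ ^ 2)
    (h₂ : (x - d) ^ 2 + y ^ 2 = r₂ ^ 2) : apexY r₁ r₂ d = y := by
  rw [apexY, apexX_eq hd h₁ h₂, ← h₁, add_sub_cancel_left, Real.sqrt_sq hy]

theorem continuousOn_apexX : ContinuousOn (apexX r₁ r₂) (Ioi 0) :=
  ContinuousOn.div (by fun_prop) (by fun_prop) fun _ hd => mul_ne_zero two_ne_zero (ne_of_gt hd)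

theorem continuousOn_apexY : ContinuousOn (apexY r₁ r₂) (Ioi 0) :=
  (continuousOn_const.sub (continuousOn_apexX.pow 2)).sqrt

theorem half_le_add_apexX (hr : 0 ≤ r₁ + r₂) (hd : |r₁ - r₂| < d) :
    (d + (r₁ - r₂)) / 2 ≤ r₁ + apexX r₁ r₂ d := by
  have hd0 : 0 < d := (abs_nonneg _).trans_lt hd
  have h : r₁ + apexX r₁ r₂ d = (d + (r₁ - r₂)) / 2 + (d + (r₁ - r₂)) * (r₁ + r₂) / (2 * d) := by
    unfold apexX
    field_simp
    ring
  rw [h, le_add_iff_nonneg_right]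
  have := (abs_lt.1 hd).1
  exact div_nonneg (mul_nonneg (by linarith) hr) (by positivity)

theorem eventually_pos_apex {l : Filter ℝ} {D a : ℝ → ℝ} {δ : ℝ} (hr : 0 ≤ r₁ + r₂)
    (hδ : |r₁ - r₂| < δ) (hD : ∀ᶠ y in l, δ ≤ D y)
    (ha : Tendsto (fun y => a y * apexY r₁ r₂ (D y)) l (𝓝 0)) :
    ∀ᶠ y in l, 0 < r₁ + apexX r₁ r₂ (D y) + a y * apexY r₁ r₂ (D y) := by
  have hneg : -((δ + (r₁ - r₂)) / 2) < 0 := by linarith [(abs_lt.1 hδ).1]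
  filter_upwards [hD, ha.eventually_const_lt hneg] with y hy hay
  linarith [half_le_add_apexX hr (hδ.trans_le hy)]

-- Either the base stays shorter than `r₁ + r₂`, and then `a` tends to `0` at infinity, or the
-- height of the apex tends to `0` at the first time when it does not.
theorem exists_filter_tendsto_mul_apexY {D : ℝ → ℝ} (hr₁ : 0 ≤ r₁) (hr₂ : 0 ≤ r₂)
    (hD : ContinuousOn D (Ici 1)) (hmin : ∀ y ≥ 1, D 1 ≤ D y) (hd : |r₁ - r₂| < D 1)
    (hd' : D 1 < r₁ + r₂) :
    ∃ l : Filter ℝ, l.NeBot ∧ (∀ᶠ y in l, 1 ≤ y ∧ ∀ x ∈ Icc 1 y, D x < r₁ + r₂) ∧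
      ∀ a : ℝ → ℝ, ContinuousOn a (Ici 1) → Tendsto a atTop (𝓝 0) →
        Tendsto (fun y => a y * apexY r₁ r₂ (D y)) l (𝓝 0) := by
  have hpos : MapsTo D (Ici 1) (Ioi 0) := fun y hy =>
    (abs_nonneg _).trans_lt (hd.trans_le (hmin y hy))
  by_cases hlt : ∀ y ≥ 1, D y < r₁ + r₂
  · refine ⟨atTop, inferInstance, ?_, fun a _ ha => ?_⟩
    · filter_upwards [eventually_ge_atTop 1] with y hy using ⟨hy, fun x hx => hlt x hx.1⟩
    · refine ha.zero_mul_isBoundedUnder_le (isBoundedUnder_of ⟨r₁, fun y => ?_⟩)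
      exact (Real.norm_of_nonneg (Real.sqrt_nonneg _)).trans_le (apexY_le hr₁)
  push Not at hlt
  obtain ⟨Y, hY, hDY⟩ := hlt
  have hclosed : IsClosed (Icc 1 Y ∩ D ⁻¹' Ici (r₁ + r₂)) :=
    (hD.mono Icc_subset_Ici_self).preimage_isClosed_of_isClosed isClosed_Icc isClosed_Ici
  obtain ⟨z, ⟨hz, hDz⟩, hleast⟩ :=
    (isCompact_Icc.of_isClosed_subset hclosed inter_subset_left).exists_isLeast
      ⟨Y, right_mem_Icc.2 hY, hDY⟩
  have hz1 : 1 < z := hz.1.lt_of_ne fun h => hd'.not_ge (h ▸ hDz)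
  refine ⟨𝓝[Ico 1 z] z, right_nhdsWithin_Ico_neBot hz1, ?_, fun a ha _ => ?_⟩
  · filter_upwards [self_mem_nhdsWithin] with y hy
    refine ⟨hy.1, fun x hx => not_le.1 fun hDx => ?_⟩
    have hxz : x < z := hx.2.trans_lt hy.2
    exact hxz.not_ge (hleast ⟨⟨hx.1, hxz.le.trans hz.2⟩, hDx⟩)
  · have hcont : ContinuousWithinAt (fun y => a y * apexY r₁ r₂ (D y)) (Ici 1) z :=
      ha.mul (continuousOn_apexY.comp hD hpos) z hz.1
    have h0 := apexY_eq_zero hr₁ hr₂ (hpos hz.1) hDz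
    simpa [ContinuousWithinAt, h0] using hcont.tendsto.mono_left
      (nhdsWithin_mono z (Ico_subset_Icc_self.trans Icc_subset_Ici_self))

theorem exists_pos_apex {D a b : ℝ → ℝ} (hr₁ : 0 ≤ r₁) (hr₂ : 0 ≤ r₂)
    (hD : ContinuousOn D (Ici 1)) (hmin : ∀ y ≥ 1, D 1 ≤ D y) (hd : |r₁ - r₂| < D 1)
    (hd' : D 1 < r₁ + r₂) (ha : ContinuousOn a (Ici 1)) (ha0 : Tendsto a atTop (𝓝 0))
    (hb : ContinuousOn b (Ici 1)) (hb0 : Tendsto b atTop (𝓝 0)) :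
    ∃ z ≥ 1, (∀ y ∈ Icc 1 z, D y < r₁ + r₂) ∧
      0 < r₁ + apexX r₁ r₂ (D z) + a z * apexY r₁ r₂ (D z) ∧
      0 < r₂ + apexX r₂ r₁ (D z) + b z * apexY r₂ r₁ (D z) := by
  obtain ⟨l, hl, hlt, hlim⟩ := exists_filter_tendsto_mul_apexY hr₁ hr₂ hD hmin hd hd'
  have hle : ∀ᶠ y in l, D 1 ≤ D y := hlt.mono fun y hy => hmin y hy.1
  have hb' : Tendsto (fun y => b y * apexY r₂ r₁ (D y)) l (𝓝 0) :=
    (hlim b hb hb0).congr' <| hle.mono fun y hy => by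
      rw [apexY_swap ((abs_nonneg _).trans_lt (hd.trans_le hy)).ne']
  obtain ⟨z, ⟨hz, hzlt⟩, hza, hzb⟩ := (hlt.and
    ((eventually_pos_apex (add_nonneg hr₁ hr₂) hd hle (hlim a ha ha0)).and
      (eventually_pos_apex (add_nonneg hr₂ hr₁) (abs_sub_comm r₁ r₂ ▸ hd) hle hb'))).exists
  exact ⟨z, hz, hzlt, hza, hzb⟩

end apex

/-! ### Capped chains -/

theorem polygonEdge_of_succ_lt {n : ℕ} {v : ℕ → E2} {i : ℕ} (hi : i + 1 < n) :
    polygonEdge n v i = segment ℝ (v i) (v (i + 1)) := by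
  rw [polygonEdge, Nat.mod_eq_of_lt hi]

theorem polygonEdge_last {n : ℕ} {v : ℕ → E2} :
    polygonEdge (n + 1) v n = segment ℝ (v n) (v 0) := by
  rw [polygonEdge, Nat.mod_self]

/-- The polygon `p 0, …, p (k + 1)` consists of a convex polygon `p 0, …, p k` hanging below its
base, which is horizontal with left end `p 0 = 0` and right end `p k`, and of a vertex `p (k + 1)`
above that base. -/
structure IsCappedChain (k : ℕ) (p : ℕ → E2) : Prop where
  two_le : 2 ≤ k
  first : p 0 = 0
  last_fst : 0 < p k 0
  last_snd : p k 1 = 0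
  below : ∀ j, 0 < j → j < k → p j 1 < 0
  base : HasSupportingEdges (k + 1) p
  above : 0 < p (k + 1) 1

namespace IsCappedChain

variable {k : ℕ} {p : ℕ → E2}

theorem first_ne_last (h : IsCappedChain k p) : p 0 ≠ p k := fun h0 => by
  simpa [← h0, h.first] using h.last_fst

theorem snd_nonpos (h : IsCappedChain k p) {j : ℕ} (hj : j ≤ k) : p j 1 ≤ 0 := by
  rcases j.eq_zero_or_pos with rfl | hj0
  · simp [h.first]
  rcases hj.eq_or_lt with rfl | hjk
  exacts [h.last_snd.le, (h.below j hj0 hjk).le]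

theorem left_of_edge_of_left (h : IsCappedChain k p) {i j j' : ℕ} (hi : i < k) (hj : j ≤ k)
    (hji : j ≠ i) (hji' : j ≠ i + 1) (hj' : j' ≤ k) (hj'i : j' ≠ i) (hj'i' : j' ≠ i + 1)
    (hleft : 0 < planeCross (p (i + 1) - p i) (p j' - p i)) :
    0 < planeCross (p (i + 1) - p i) (p j - p i) := by
  obtain ⟨f, hfi, hf⟩ := h.base i (by omega)
  rw [Nat.mod_eq_of_lt (by omega)] at hfi hf
  refine planeCross_pos_of_support (f := f) ?_ ?_ ?_ hleft
  · rw [map_sub, hfi, sub_self]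
  · rw [map_sub, sub_neg]
    exact hf j' (by omega) hj'i hj'i'
  · rw [map_sub, sub_neg]
    exact hf j (by omega) hji hji'

theorem left_of_edge (h : IsCappedChain k p) {i j : ℕ} (hi : i < k) (hj : j ≤ k) (hji : j ≠ i)
    (hji' : j ≠ i + 1) : 0 < planeCross (p (i + 1) - p i) (p j - p i) := by
  have hk := h.two_le
  induction i generalizing j with
  | zero =>
    refine h.left_of_edge_of_left hi hj hji hji' (j' := k) le_rfl (by omega) (by omega) ?_
    rw [h.first, sub_zero, sub_zero, planeCross_apply, h.last_snd, mul_zero, zero_sub, neg_pos]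
    exact mul_neg_of_neg_of_pos (h.below 1 one_pos (by omega)) h.last_fst
  | succ i ih =>
    refine h.left_of_edge_of_left hi hj hji hji' (j' := i) (by omega) (by omega) (by omega) ?_
    have hturn : planeCross (p (i + 1 + 1) - p (i + 1)) (p i - p (i + 1)) =
        planeCross (p (i + 1) - p i) (p (i + 1 + 1) - p i) := by
      simp only [planeCross_apply, PiLp.sub_apply]
      ring
    rw [hturn]
    exact ih (by omega) hi (by omega) (by omega)

theorem snd_nonpos_of_mem_polygonEdge (h : IsCappedChain k p) {i : ℕ} (hi : i < k) {z : E2}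
    (hz : z ∈ polygonEdge (k + 1) p i) : z 1 ≤ 0 := by
  rw [polygonEdge_of_succ_lt (by omega)] at hz
  exact le_of_mem_segment (EuclideanSpace.projₗ 1) hz (h.snd_nonpos hi.le) (h.snd_nonpos hi)

theorem eq_of_mem_segment_apex (h : IsCappedChain k p) {j : ℕ} (hj : p j 1 = 0) {z : E2}
    (hz : z ∈ segment ℝ (p j) (p (k + 1))) (hz1 : z 1 ≤ 0) : z = p j := by
  rw [← hj] at hz1
  exact eq_left_of_mem_segment (EuclideanSpace.projₗ 1) hz (hj.trans_lt h.above) hz1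

theorem succ_eq_of_last_mem (h : IsCappedChain k p) {i : ℕ} (hi : i < k)
    (hmem : p k ∈ polygonEdge (k + 1) p i) : i + 1 = k := by
  have hsimple := h.base.isSimplePolygon (by linarith [h.two_le])
  rcases hsimple.eq_of_mem_polygonEdge (show i < k + 1 by omega) k.lt_add_one hi.ne hmem
    (left_mem_segment _ _ _) with ⟨h1, -⟩ | ⟨h1, h2⟩
  · rwa [Nat.mod_eq_of_lt (by omega)] at h1
  · rw [Nat.mod_self] at h1
    exact absurd (h1 ▸ h2).symm h.first_ne_last

theorem eq_zero_of_first_mem (h : IsCappedChain k p) {i : ℕ} (hi : i < k)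
    (hmem : p 0 ∈ polygonEdge (k + 1) p i) : i = 0 := by
  have hsimple := h.base.isSimplePolygon (by linarith [h.two_le])
  rcases hsimple.eq_of_mem_polygonEdge (show i < k + 1 by omega) k.lt_add_one hi.ne hmem
    (polygonEdge_last ▸ right_mem_segment _ _ _) with ⟨-, h1⟩ | ⟨h1, -⟩
  · exact absurd h1 h.first_ne_last
  · rw [← h1, Nat.mod_self]

theorem eq_apex_of_mem (h : IsCappedChain k p) {z : E2} (hz : z ∈ segment ℝ (p k) (p (k + 1)))
    (hz' : z ∈ segment ℝ (p 0) (p (k + 1))) : z = p (k + 1) := by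
  rw [h.first, segment_symm] at hz'
  rw [segment_symm] at hz
  have hcross := planeCross_eq_of_mem_segment hz'
  rw [zero_sub, map_neg, LinearMap.neg_apply, LinearMap.neg_apply, planeCross_self] at hcross
  refine eq_left_of_mem_segment (-planeCross (p (k + 1))) hz ?_ ?_
  · rw [LinearMap.neg_apply, LinearMap.neg_apply, planeCross_self, planeCross_apply, h.last_snd,
      mul_zero, zero_sub, neg_neg, neg_zero]
    exact mul_pos h.above h.last_fst
  · rw [LinearMap.neg_apply, LinearMap.neg_apply, hcross, planeCross_self]

theorem injOn (h : IsCappedChain k p) : InjOn p (Iio (k + 2)) := by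
  have hapex : ∀ j ≤ k, p j ≠ p (k + 1) := fun j hj hjk =>
    (h.snd_nonpos hj).not_gt (hjk ▸ h.above)
  intro i (hi : i < k + 2) j (hj : j < k + 2) hij
  rcases (Nat.lt_succ_iff.1 hi).eq_or_lt with rfl | hi' <;>
    rcases (Nat.lt_succ_iff.1 hj).eq_or_lt with rfl | hj'
  · rfl
  · exact absurd hij.symm (hapex j (by omega))
  · exact absurd hij (hapex i (by omega))
  · exact h.base.injOn (by linarith [h.two_le]) hi' hj' hij

theorem isSimplePolygon (h : IsCappedChain k p) : IsSimplePolygon (k + 2) p := by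
  have hk := h.two_le
  refine isSimplePolygon_iff.2 ⟨by omega, h.injOn, fun i hi j hj hij z hzi hzj => ?_⟩
  wlog hlt : i < j generalizing i j
  · exact (this j hj i hi hij.symm hzj hzi (by omega)).symm
  have hchain : ∀ {m}, m < k → polygonEdge (k + 2) p m = polygonEdge (k + 1) p m := fun hm => by
    rw [polygonEdge_of_succ_lt (by omega), polygonEdge_of_succ_lt (by omega)]
  have hright : polygonEdge (k + 2) p k = segment ℝ (p k) (p (k + 1)) :=
    polygonEdge_of_succ_lt (by omega)
  have hleft : polygonEdge (k + 2) p (k + 1) = segment ℝ (p 0) (p (k + 1)) := by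
    rw [polygonEdge_last, segment_symm]
  rw [Nat.mod_eq_of_lt (show i + 1 < k + 2 by omega)]
  rcases (show i < k ∨ i = k by omega) with hik | rfl
  · rw [hchain hik] at hzi
    have hz1 := h.snd_nonpos_of_mem_polygonEdge hik hzi
    rcases (show j < k ∨ j = k ∨ j = k + 1 by omega) with hjk | rfl | rfl
    · rw [hchain hjk] at hzj
      have := (h.base.isSimplePolygon (by omega)).eq_of_mem_polygonEdge (by omega) (by omega) hij
        hzi hzj
      rw [Nat.mod_eq_of_lt (by omega), Nat.mod_eq_of_lt (by omega)] at this
      exact Or.inl (this.resolve_right (by omega))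
    · obtain rfl := h.eq_of_mem_segment_apex h.last_snd (hright ▸ hzj) hz1
      exact Or.inl ⟨h.succ_eq_of_last_mem hik hzi, rfl⟩
    · obtain rfl := h.eq_of_mem_segment_apex (by simp [h.first]) (hleft ▸ hzj) hz1
      obtain rfl := h.eq_zero_of_first_mem hik hzi
      exact Or.inr ⟨Nat.mod_self _, rfl⟩
  · obtain rfl : j = i + 1 := by omega
    exact Or.inl ⟨rfl, h.eq_apex_of_mem (hright ▸ hzi) (hleft ▸ hzj)⟩

theorem left_of_left_cap (h : IsCappedChain k p) {j : ℕ} (hj : 0 < j) (hjk : j ≤ k)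
    (hcap : 0 < planeCross (p 1 - p 0) (p (k + 1) - p 0)) :
    0 < planeCross (p 0 - p (k + 1)) (p j - p (k + 1)) := by
  have hk := h.two_le
  simp only [h.first, sub_zero, zero_sub, map_neg, LinearMap.neg_apply, map_sub, planeCross_self]
    at hcap ⊢
  have hj1 : 0 ≤ planeCross (p 1) (p j) ∧ (0 < planeCross (p 1) (p j) ∨ p j 1 < 0) := by
    rcases (show j = 1 ∨ 1 < j by omega) with rfl | hj1
    · exact ⟨(planeCross_self _).ge, Or.inr (h.below 1 one_pos (by omega))⟩
    · have := h.left_of_edge (i := 0) (by omega) hjk (by omega) (by omega)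
      simp only [h.first, sub_zero, zero_add] at this
      exact ⟨this.le, Or.inl this⟩
  have hneg := planeCross_mul_neg_of_support (EuclideanSpace.projₗ 1) (h.snd_nonpos hjk) h.above
    hj1.1 hcap hj1.2.symm
  simpa only [neg_zero, sub_zero, planeCross_flip (p j), neg_neg] using
    pos_of_mul_neg_left hneg (h.below 1 one_pos (by omega)).le

theorem left_of_right_cap (h : IsCappedChain k p) {j : ℕ} (hjk : j < k)
    (hcap : 0 < planeCross (p k - p (k - 1)) (p (k + 1) - p (k - 1))) :
    0 < planeCross (p (k + 1) - p k) (p j - p k) := by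
  have hk := h.two_le
  obtain ⟨m, rfl⟩ : ∃ m, k = m + 1 := ⟨k - 1, by omega⟩
  rw [Nat.add_sub_cancel] at hcap
  have hj : 0 ≤ planeCross (p (m + 1) - p m) (p j - p m) ∧
      (p j 1 < 0 ∨ 0 < planeCross (p (m + 1) - p m) (p j - p m)) := by
    rcases (Nat.lt_succ_iff.1 hjk).eq_or_lt with rfl | hjm
    · exact ⟨by simp, Or.inl (h.below j (by omega) hjk)⟩
    · have := h.left_of_edge m.lt_add_one hjk.le hjm.ne (by omega)
      exact ⟨this.le, Or.inr this⟩
  have hneg := planeCross_mul_neg_of_support (EuclideanSpace.projₗ 1) (e := p (m + 1) - p m)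
    (x := p j - p (m + 1)) (y := p (m + 1 + 1) - p (m + 1))
    (by simpa [h.last_snd] using h.snd_nonpos hjk.le) (by simpa [h.last_snd] using h.above)
    (by rw [planeCross_sub_sub_right]; exact hj.1) (by rw [planeCross_sub_sub_right]; exact hcap)
    (by rw [planeCross_sub_sub_right]; simpa [h.last_snd] using hj.2)
  rw [planeCross_flip, neg_pos]
  refine neg_of_mul_neg_left hneg ?_
  simpa [h.last_snd] using h.snd_nonpos (Nat.le_succ m)

theorem hasSupportingEdges (h : IsCappedChain k p)
    (hcap : ∀ i < k, 0 < planeCross (p (i + 1) - p i) (p (k + 1) - p i)) :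
    HasSupportingEdges (k + 2) p := by
  have hk := h.two_le
  refine hasSupportingEdges_of_left fun i hi j hj hji hji' => ?_
  rcases (show i < k ∨ i = k ∨ i = k + 1 by omega) with hik | rfl | rfl
  · rw [Nat.mod_eq_of_lt (by omega)] at hji' ⊢
    rcases (Nat.lt_succ_iff.1 hj).eq_or_lt with rfl | hj'
    exacts [hcap i hik, h.left_of_edge hik (by omega) hji hji']
  · rw [Nat.mod_eq_of_lt (by omega)] at hji' ⊢
    refine h.left_of_right_cap (by omega) ?_
    simpa only [Nat.sub_add_cancel (show 1 ≤ i by omega)] using hcap (i - 1) (by omega)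
  · rw [Nat.mod_self] at hji' ⊢
    exact h.left_of_left_cap (by omega) (by omega) (hcap 0 (by omega))

end IsCappedChain

/-- The chain `chain ℓ u 0, …, chain ℓ u k`, closed up by an apex above its base whose edges have
length `r₁` to the first and length `r₂` to the last vertex of the chain. -/
def cappedChain (ℓ u : ℕ → ℝ) (k : ℕ) (r₁ r₂ : ℝ) (j : ℕ) : E2 :=
  if j ≤ k then chain ℓ u j
  else !₂[apexX r₁ r₂ (chain ℓ u k 0), apexY r₁ r₂ (chain ℓ u k 0)]

section cappedChain

variable {ℓ u : ℕ → ℝ} {k : ℕ} {r₁ r₂ : ℝ}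

theorem cappedChain_of_le {j : ℕ} (hj : j ≤ k) : cappedChain ℓ u k r₁ r₂ j = chain ℓ u j :=
  if_pos hj

theorem cappedChain_apex : cappedChain ℓ u k r₁ r₂ (k + 1) =
    !₂[apexX r₁ r₂ (chain ℓ u k 0), apexY r₁ r₂ (chain ℓ u k 0)] :=
  if_neg (by omega)

theorem norm_cappedChain_apex (hr₁ : 0 ≤ r₁) (hY : 0 < apexY r₁ r₂ (chain ℓ u k 0)) :
    ‖cappedChain ℓ u k r₁ r₂ (k + 1)‖ = r₁ := by
  rw [cappedChain_apex]
  exact plane_norm_eq hr₁ (apexX_sq_add_apexY_sq hY)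

theorem continuousOn_cappedChain {U : ℝ → ℕ → ℝ} {s : Set ℝ} (j : ℕ)
    (hU : ∀ i < k, ContinuousOn (fun y => U y i) s) (hpos : ∀ y ∈ s, 0 < chain ℓ (U y) k 0) :
    ContinuousOn (fun y => cappedChain ℓ (U y) k r₁ r₂ j) s := by
  rcases le_or_gt j k with hj | hj
  · simp only [cappedChain_of_le hj]
    exact continuousOn_chain ℓ j fun i hi => hU i (by omega)
  · simp only [cappedChain, if_neg hj.not_ge]
    have hbase := (PiLp.continuous_apply 2 _ 0).comp_continuousOn (continuousOn_chain ℓ k hU)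
    refine (PiLp.continuous_toLp 2 _).comp_continuousOn (continuousOn_pi.2 fun i => ?_)
    fin_cases i
    · exact continuousOn_apexX.comp hbase hpos
    · exact continuousOn_apexY.comp hbase hpos

end cappedChain

namespace IsConvexArc

variable {ℓ u : ℕ → ℝ} {k : ℕ} {r₁ r₂ : ℝ}

theorem hasSupportingEdges (h : IsConvexArc ℓ u k) : HasSupportingEdges (k + 1) (chain ℓ u) := by
  have hk := h.pos
  refine hasSupportingEdges_of_left fun i hi j hj hji hji' => ?_
  rcases (Nat.lt_succ_iff.1 hi).eq_or_lt with rfl | hi'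
  · rw [Nat.mod_self] at hji' ⊢
    rw [chain_zero, zero_sub, planeCross_apply]
    simp only [PiLp.neg_apply, PiLp.sub_apply, h.last_snd, neg_zero, zero_mul, sub_zero]
    exact mul_pos_of_neg_of_neg (neg_neg_of_pos h.last_fst) (h.below (by omega) (by omega))
  · rw [Nat.mod_eq_of_lt (by omega)] at hji' ⊢
    exact h.left_of_edge hi' (by omega) hji hji'

theorem isCappedChain (h : IsConvexArc ℓ u k) (hk : 2 ≤ k)
    (hY : 0 < apexY r₁ r₂ (chain ℓ u k 0)) : IsCappedChain k (cappedChain ℓ u k r₁ r₂) where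
  two_le := hk
  first := cappedChain_of_le k.zero_le
  last_fst := by simpa only [cappedChain_of_le le_rfl] using h.last_fst
  last_snd := by simpa only [cappedChain_of_le le_rfl] using h.last_snd
  below j hj hjk := by simpa only [cappedChain_of_le hjk.le] using h.below hj hjk
  base := h.hasSupportingEdges.congr fun j hj => cappedChain_of_le (by omega)
  above := by rwa [cappedChain_apex]

theorem apex_sub_last_fst (h : IsConvexArc ℓ u k) :
    (cappedChain ℓ u k r₁ r₂ (k + 1) - chain ℓ u k) 0 = -apexX r₂ r₁ (chain ℓ u k 0) := by
  rw [cappedChain_apex, apexX_swap (r₁ := r₁) h.last_fst.ne', neg_sub]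
  rfl

theorem apex_sub_last_snd (h : IsConvexArc ℓ u k) :
    (cappedChain ℓ u k r₁ r₂ (k + 1) - chain ℓ u k) 1 = apexY r₁ r₂ (chain ℓ u k 0) := by
  rw [cappedChain_apex, PiLp.sub_apply, h.last_snd, sub_zero]
  rfl

theorem norm_apex_sub_last (h : IsConvexArc ℓ u k) (hr₂ : 0 ≤ r₂)
    (hY : 0 < apexY r₁ r₂ (chain ℓ u k 0)) :
    ‖cappedChain ℓ u k r₁ r₂ (k + 1) - chain ℓ u k‖ = r₂ := by
  refine plane_norm_eq hr₂ ?_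
  rw [h.apex_sub_last_fst, h.apex_sub_last_snd, neg_sq, ← apexY_swap h.last_fst.ne']
  exact apexX_sq_add_apexY_sq (by rwa [apexY_swap h.last_fst.ne'])

theorem norm_edge_cappedChain (h : IsConvexArc ℓ u k) (hr₁ : 0 ≤ r₁) (hr₂ : 0 ≤ r₂)
    (hY : 0 < apexY r₁ r₂ (chain ℓ u k 0)) {i : ℕ} (hi : i < k + 2) :
    ‖cappedChain ℓ u k r₁ r₂ ((i + 1) % (k + 2)) - cappedChain ℓ u k r₁ r₂ i‖ =
      if i < k then ℓ i else if i = k then r₂ else r₁ := by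
  split_ifs with hik hik'
  · rw [Nat.mod_eq_of_lt (by omega), cappedChain_of_le hik, cappedChain_of_le hik.le, chain_succ,
      add_sub_cancel_left, norm_smul, norm_halfTanDir, mul_one,
      Real.norm_of_nonneg (h.length_pos i hik).le]
  · subst hik'
    rw [Nat.mod_eq_of_lt (by omega), cappedChain_of_le le_rfl, h.norm_apex_sub_last hr₂ hY]
  · obtain rfl : i = k + 1 := by omega
    rw [Nat.mod_self, cappedChain_of_le k.zero_le, chain_zero, zero_sub, norm_neg,
      norm_cappedChain_apex hr₁ hY]

theorem planeCross_lt_apex_of_nonpos (h : IsConvexArc ℓ u k) (hr₁ : 0 ≤ r₁)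
    (hY : 0 < apexY r₁ r₂ (chain ℓ u k 0))
    (hfirst : 0 < r₁ + apexX r₁ r₂ (chain ℓ u k 0) + u 0 * apexY r₁ r₂ (chain ℓ u k 0))
    {i : ℕ} (hi : i < k) (hui : u i ≤ 0) : planeCross (halfTanDir (u i)) (chain ℓ u i) <
      planeCross (halfTanDir (u i)) (cappedChain ℓ u k r₁ r₂ (k + 1)) := by
  have hnorm := norm_cappedChain_apex hr₁ hY
  have hu0 := h.strictMonoOn.monotoneOn (show 0 < k by omega) hi i.zero_le
  rw [cappedChain_apex] at hnorm ⊢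
  calc planeCross (halfTanDir (u i)) (chain ℓ u i)
      ≤ planeCross (halfTanDir (u i)) (chain ℓ u 0) := by
        rcases i.eq_zero_or_pos with rfl | hi0
        exacts [le_rfl, (h.planeCross_lt_of_lt hi0 hi).le]
    _ = 0 := by rw [chain_zero, map_zero]
    _ < _ := planeCross_halfTanDir_pos_of_nonpos hY hu0 hui (by rw [hnorm]; exact hfirst)

theorem planeCross_lt_apex_of_nonneg (h : IsConvexArc ℓ u k) (hr₂ : 0 ≤ r₂)
    (hY : 0 < apexY r₁ r₂ (chain ℓ u k 0))
    (hlast : 0 < r₂ + apexX r₂ r₁ (chain ℓ u k 0) - u (k - 1) * apexY r₁ r₂ (chain ℓ u k 0))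
    {i : ℕ} (hi : i < k) (hui : 0 ≤ u i) : planeCross (halfTanDir (u i)) (chain ℓ u i) <
      planeCross (halfTanDir (u i)) (cappedChain ℓ u k r₁ r₂ (k + 1)) := by
  have hulast := h.strictMonoOn.monotoneOn hi (show k - 1 < k by omega) (Nat.le_sub_one_of_lt hi)
  have hleft := planeCross_halfTanDir_pos_of_nonneg (z := cappedChain ℓ u k r₁ r₂ (k + 1) -
    chain ℓ u k) (by rwa [h.apex_sub_last_snd]) hulast hui (by
      rwa [h.norm_apex_sub_last hr₂ hY, h.apex_sub_last_fst, h.apex_sub_last_snd, sub_neg_eq_add])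
  rw [map_sub, sub_pos] at hleft
  refine lt_of_le_of_lt ?_ hleft
  rcases (show i + 1 = k ∨ i + 1 < k by omega) with rfl | hik
  · rw [planeCross_chain_succ_self]
  · exact (h.planeCross_lt_of_succ_lt hik le_rfl).le

theorem hasSupportingEdges_cappedChain (h : IsConvexArc ℓ u k) (hk : 2 ≤ k) (hr₁ : 0 ≤ r₁)
    (hr₂ : 0 ≤ r₂) (hY : 0 < apexY r₁ r₂ (chain ℓ u k 0))
    (hfirst : 0 < r₁ + apexX r₁ r₂ (chain ℓ u k 0) + u 0 * apexY r₁ r₂ (chain ℓ u k 0))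
    (hlast : 0 < r₂ + apexX r₂ r₁ (chain ℓ u k 0) - u (k - 1) * apexY r₁ r₂ (chain ℓ u k 0)) :
    HasSupportingEdges (k + 2) (cappedChain ℓ u k r₁ r₂) := by
  refine (h.isCappedChain hk hY).hasSupportingEdges fun i hi => ?_
  rw [cappedChain_of_le hi, cappedChain_of_le hi.le, chain_succ, add_sub_cancel_left,
    LinearMap.map_smul₂, smul_eq_mul, map_sub]
  refine mul_pos (h.length_pos i hi) (sub_pos.2 ?_)
  rcases le_total (u i) 0 with hui | hui
  · exact h.planeCross_lt_apex_of_nonpos hr₁ hY hfirst hi hui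
  · exact h.planeCross_lt_apex_of_nonneg hr₂ hY hlast hi hui

end IsConvexArc

namespace IsCappedChain

variable {k : ℕ} {p : ℕ → E2}

theorem norm_add_fst_edge_pos (h : IsCappedChain k p) {i : ℕ} (hi : i < k) :
    0 < ‖p (i + 1) - p i‖ + (p (i + 1) - p i) 0 := by
  refine norm_add_fst_pos fun h1 => ?_
  have hk := h.two_le
  have hsnd : p (i + 1) 1 = p i 1 := sub_eq_zero.1 h1
  have hi0 : 0 < i := by
    rw [pos_iff_ne_zero]
    rintro rfl
    refine (h.below 1 one_pos (by omega)).ne (hsnd.trans ?_)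
    simp [h.first]
  have hleft := h.left_of_edge hi k.zero_le hi0.ne (by omega)
  rw [planeCross_apply, h1, zero_mul, sub_zero, h.first, zero_sub, PiLp.neg_apply] at hleft
  exact pos_of_mul_pos_left hleft (neg_nonneg.2 (h.below i hi0 hi).le)

theorem not_local_max (h : IsCappedChain k p) {i : ℕ} (hi : i + 1 < k) :
    ¬(0 ≤ (p (i + 1) - p i) 1 ∧ (p (i + 1 + 1) - p (i + 1)) 1 ≤ 0) := by
  rintro ⟨hup, hdown⟩
  have hturn := h.left_of_edge (i := i) (j := i + 1 + 1) (by omega) hi (by omega) (by omega)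
  have hfirst := h.left_of_edge (i := i + 1) hi k.zero_le (by omega) (by omega)
  have hfirst' : 0 ≤ planeCross (p (i + 1) - p i) (p 0 - p (i + 1)) := by
    rw [planeCross_sub_sub_right]
    rcases i.eq_zero_or_pos with rfl | hi0
    · rw [sub_self, map_zero]
    · exact (h.left_of_edge (by omega) k.zero_le hi0.ne (by omega)).le
  rw [← planeCross_sub_sub_right] at hturn
  have hneg := planeCross_mul_neg_of_support (EuclideanSpace.projₗ 1)
    (e := p (i + 1 + 1) - p (i + 1)) (x := -(p (i + 1) - p i)) (y := p 0 - p (i + 1))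
    (by simpa using hup) (by simpa [h.first] using h.below (i + 1) i.succ_pos hi)
    (by rw [map_neg, ← planeCross_flip]; exact hturn.le) hfirst
    (Or.inr (by rwa [map_neg, ← planeCross_flip]))
  rw [map_neg, LinearMap.neg_apply, neg_mul, neg_neg_iff_pos] at hneg
  exact hneg.not_ge (mul_nonpos_of_nonneg_of_nonpos hfirst' hdown)

theorem halfTan_edge_lt (h : IsCappedChain k p) {i : ℕ} (hi : i + 1 < k) :
    halfTan (p (i + 1) - p i) < halfTan (p (i + 1 + 1) - p (i + 1)) := by
  have hturn := h.left_of_edge (i := i) (j := i + 1 + 1) (by omega) hi (by omega) (by omega)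
  refine halfTan_lt_halfTan (h.norm_add_fst_edge_pos (by omega)) (h.norm_add_fst_edge_pos hi) ?_
    (h.not_local_max hi)
  rwa [planeCross_sub_sub_right]

theorem exists_convexArc (h : IsCappedChain k p) :
    ∃ ℓ u, IsConvexArc ℓ u k ∧ ∀ j ≤ k, chain ℓ u j = p j := by
  set ℓ : ℕ → ℝ := fun i => ‖p (i + 1) - p i‖
  set u : ℕ → ℝ := fun i => halfTan (p (i + 1) - p i)
  have hchain : ∀ j ≤ k, chain ℓ u j = p j := fun j hj => by
    induction j with
    | zero => exact h.first.symm
    | succ j ih =>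
      rw [chain_succ, ih (by omega), norm_smul_halfTanDir_halfTan (h.norm_add_fst_edge_pos hj),
        add_sub_cancel]
  refine ⟨ℓ, u, ⟨fun i hi => ?_, ?_, ?_, ?_⟩, hchain⟩
  · refine norm_pos_iff.2 fun h0 => ?_
    simpa [h0] using h.norm_add_fst_edge_pos hi
  · exact strictMonoOn_of_lt_add_one ordConnected_Iio fun i _ _ hi => h.halfTan_edge_lt hi
  · rw [hchain k le_rfl]
    exact h.last_fst
  · rw [hchain k le_rfl]
    exact h.last_snd

theorem apex_eq (h : IsCappedChain k p) :
    apexX ‖p (k + 1)‖ ‖p (k + 1) - p k‖ (p k 0) = p (k + 1) 0 ∧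
      apexY ‖p (k + 1)‖ ‖p (k + 1) - p k‖ (p k 0) = p (k + 1) 1 := by
  have h₁ := (plane_norm_sq (p (k + 1))).symm
  have h₂ := (plane_norm_sq (p (k + 1) - p k)).symm
  rw [PiLp.sub_apply, PiLp.sub_apply, h.last_snd, sub_zero] at h₂
  exact ⟨apexX_eq h.last_fst.ne' h₁ h₂, apexY_eq h.last_fst.ne' h.above.le h₁ h₂⟩

theorem eq_cappedChain (h : IsCappedChain k p) {ℓ u : ℕ → ℝ}
    (hchain : ∀ j ≤ k, chain ℓ u j = p j) {j : ℕ} (hj : j < k + 2) :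
    p j = cappedChain ℓ u k ‖p (k + 1)‖ ‖p (k + 1) - p k‖ j := by
  rcases (Nat.lt_succ_iff.1 hj).eq_or_lt with rfl | hjk
  · rw [cappedChain_apex, hchain k le_rfl, h.apex_eq.1, h.apex_eq.2]
    ext i
    fin_cases i <;> rfl
  · rw [cappedChain_of_le (by omega), hchain j (by omega)]

theorem isConvexifiable (h : IsCappedChain k p) : IsConvexifiable (k + 2) p := by
  obtain ⟨ℓ, u, harc, hchain⟩ := h.exists_convexArc
  obtain ⟨U, rfl, hcont, hU, hlim⟩ := harc.exists_flattening
  set r₁ := ‖p (k + 1)‖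
  set r₂ := ‖p (k + 1) - p k‖
  have hr₁ : 0 ≤ r₁ := norm_nonneg _
  have hr₂ : 0 ≤ r₂ := norm_nonneg _
  have hpos : ∀ y ≥ 1, 0 < chain ℓ (U y) k 0 := fun y hy => (hU y hy).1.last_fst
  obtain ⟨hd, hd'⟩ : |r₁ - r₂| < chain ℓ (U 1) k 0 ∧ chain ℓ (U 1) k 0 < r₁ + r₂ := by
    rw [← apexY_pos_iff hr₁ hr₂ harc.last_fst, hchain k le_rfl, h.apex_eq.2]
    exact h.above
  have hD : ContinuousOn (fun y => chain ℓ (U y) k 0) (Ici 1) :=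
    (PiLp.continuous_apply 2 _ 0).comp_continuousOn (continuousOn_chain ℓ k fun i _ => hcont i)
  obtain ⟨z, hz, hlt, hfirst, hlast⟩ := exists_pos_apex (a := fun y => U y 0)
    (b := fun y => -U y (k - 1)) hr₁ hr₂ hD (fun y hy => (hU y hy).2) hd hd' (hcont 0) (hlim 0)
    (hcont (k - 1)).neg (by simpa only [neg_zero] using (hlim (k - 1)).neg)
  have hY : ∀ y ∈ Icc 1 z, 0 < apexY r₁ r₂ (chain ℓ (U y) k 0) := fun y hy =>
    (apexY_pos_iff hr₁ hr₂ (hpos y hy.1)).2 ⟨hd.trans_le (hU y hy.1).2, hlt y hy⟩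
  have hzz : z ∈ Icc 1 z := right_mem_Icc.2 hz
  rw [apexY_swap (hpos z hz).ne', neg_mul, ← sub_eq_add_neg] at hlast
  refine (isConvexifiable_of_path (P := fun y => cappedChain ℓ (U y) k r₁ r₂) hz (fun i _ => ?_)
    (fun y hy => ?_) (fun y hy i hi => ?_) ?_).congr fun j hj => h.eq_cappedChain hchain hj
  · exact continuousOn_cappedChain i (fun m _ => (hcont m).mono Icc_subset_Ici_self)
      fun y hy => hpos y hy.1
  · exact ((hU y hy.1).1.isCappedChain h.two_le (hY y hy)).isSimplePolygon
  · rw [(hU y hy.1).1.norm_edge_cappedChain hr₁ hr₂ (hY y hy) hi,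
      harc.norm_edge_cappedChain hr₁ hr₂ (hY 1 (left_mem_Icc.2 hz)) hi]
  · exact (hU z hz).1.hasSupportingEdges_cappedChain h.two_le hr₁ hr₂ (hY z hzz) hfirst hlast

end IsCappedChain

/-! ### Barbed polygons -/

-- Otherwise the midpoint of the base, an interior point, can escape to infinity without meeting
-- the boundary, which lies on one side of the line through the base.
theorem lt_apex_of_openSegment_subset {k : ℕ} {w : ℕ → E2}
    (hear : openSegment ℝ (w k) (w 0) ⊆ polygonInterior (k + 2) w) {f : StrongDual ℝ E2}
    (hf : f ≠ 0) (hbase : f (w k) = f (w 0)) (hle : ∀ j ≤ k, f (w j) ≤ f (w 0)) :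
    f (w 0) < f (w (k + 1)) := by
  have hmid : midpoint ℝ (w k) (w 0) ∈ openSegment ℝ (w k) (w 0) :=
    midpoint_mem_openSegment _ _
  have hfm : f (midpoint ℝ (w k) (w 0)) = f (w 0) :=
    (f.toLinearMap.toAffineMap.map_midpoint (w k) (w 0)).trans (by simp [hbase])
  obtain ⟨hnotMem, hbounded⟩ := hear hmid
  by_contra! hapex
  have hall : ∀ j < k + 2, f (w j) ≤ f (w 0) := fun j hj => by
    rcases (Nat.lt_succ_iff.1 hj).eq_or_lt with rfl | hjk
    exacts [hapex, hle j (by omega)]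
  refine not_isBounded_connectedComponentIn_compl hf hnotMem ?_ hbounded
  rintro z ⟨i, hi, hz⟩
  exact hfm ▸ le_of_mem_segment f.toLinearMap hz (hall i hi) (hall _ (Nat.mod_lt _ (by omega)))

theorem two_le_of_openSegment_subset {k : ℕ} {w : ℕ → E2} (hk : k ≠ 0)
    (hear : openSegment ℝ (w k) (w 0) ⊆ polygonInterior (k + 2) w) : 2 ≤ k := by
  by_contra hlt
  obtain rfl : k = 1 := by omega
  have hmid : midpoint ℝ (w 1) (w 0) ∈ openSegment ℝ (w 1) (w 0) := midpoint_mem_openSegment _ _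
  refine (hear hmid).1 ⟨0, by omega, ?_⟩
  rw [segment_symm]
  exact openSegment_subset_segment ℝ _ _ hmid

theorem exists_isCappedChain {k : ℕ} {w : ℕ → E2} (hk : 2 ≤ k)
    (hear : openSegment ℝ (w k) (w 0) ⊆ polygonInterior (k + 2) w)
    (hbase : HasSupportingEdges (k + 1) w) :
    ∃ A : E2 ≃ᵃⁱ[ℝ] E2, IsCappedChain k fun j => A (w j) := by
  obtain ⟨g, hgk, hg⟩ := hbase k k.lt_succ_self
  rw [Nat.mod_self] at hgk hg
  set f : StrongDual ℝ E2 := g.toContinuousLinearMap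
  have hlt : ∀ j, 0 < j → j < k → f (w j) < f (w 0) := fun j hj hjk =>
    (hg j (by omega) hjk.ne hj.ne').trans_eq hgk
  have hne : w k - w 0 ≠ 0 := sub_ne_zero.2 <|
    (hbase.injOn (by omega)).ne k.lt_succ_self k.succ_pos (by omega)
  have hf : f ≠ 0 := fun h0 => by simpa [h0] using hlt 1 one_pos hk
  have hapex : f (w 0) < f (w (k + 1)) :=
    lt_apex_of_openSegment_subset hear hf hgk fun j hjk => by
      rcases j.eq_zero_or_pos with rfl | hj
      · exact le_rfl
      · rcases hjk.eq_or_lt with rfl | hjk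
        exacts [hgk.le, (hlt j hj hjk).le]
  obtain ⟨R, hR0, hR1, c, hc, hR⟩ := exists_linearIsometryEquiv_snd_eq finrank_euclideanSpace_fin hf
    hne (by rw [map_sub, sub_eq_zero]; exact hgk)
  set A : E2 ≃ᵃⁱ[ℝ] E2 :=
    (AffineIsometryEquiv.vaddConst ℝ (w 0)).symm.trans R.toAffineIsometryEquiv
  have hA : ∀ z, A z = R (z - w 0) := fun z => by simp [A]
  have hheight : ∀ z, f z = f (w 0) + c * A z 1 := fun z => by
    rw [hA, ← hR, map_sub, add_sub_cancel]
  refine ⟨A, hk, by rw [hA, sub_self, map_zero], by rwa [hA], by rwa [hA], fun j hj hjk => ?_,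
    hbase.map A, ?_⟩
  · exact neg_of_mul_neg_right (a := c) (by linarith [hheight (w j), hlt j hj hjk]) hc.le
  · exact pos_of_mul_pos_right (a := c) (by linarith [hheight (w (k + 1))]) hc.le

theorem isConvexifiable_of_openSegment_subset {k : ℕ} {w : ℕ → E2} (hk : k ≠ 0)
    (hear : openSegment ℝ (w k) (w 0) ⊆ polygonInterior (k + 2) w)
    (hbase : HasSupportingEdges (k + 1) w) : IsConvexifiable (k + 2) w := by
  obtain ⟨A, hA⟩ := exists_isCappedChain (two_le_of_openSegment_subset hk hear) hear hbase
  exact .of_map A hA.isConvexifiable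

theorem rotateVertices_removal {n i j : ℕ} (v : ℕ → E2) (hi : i < n) (hj : j < n - 1) :
    rotateVertices (n - 1) i (fun j => if j < i then v j else v (j + 1)) j =
      rotateVertices n (i + 1) v j := by
  rw [rotateVertices, rotateVertices]
  rcases lt_or_ge (j + i) (n - 1) with h | h
  · rw [Nat.mod_eq_of_lt h, Nat.mod_eq_of_lt (by omega), if_neg (by omega), add_assoc]
  · rw [Nat.mod_eq_sub_mod h, Nat.mod_eq_of_lt (by omega), if_pos (by omega),
      Nat.mod_eq_sub_mod (by omega), Nat.mod_eq_of_lt (by omega)]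
    congr 1
    omega

/-- Every barbed simple polygon in the plane can be convexified by
a motion that remains entirely within its plane. -/
theorem barbed_polygon_convexifiable_in_plane (n : ℕ) (v : ℕ → E2)
    (hsimple : IsSimplePolygon n v) (hbarbed : IsBarbed n v) :
    ∃ γ : ℝ → ℕ → E2, IsPlanarMotion n v γ ∧ IsConvexPolygonConfig n (γ 1) := by
  obtain ⟨i, hi, hear, hconv⟩ := hbarbed
  obtain ⟨k, rfl⟩ : ∃ k, n = k + 2 := ⟨n - 2, by have := hsimple.1; omega⟩
  have hbase : HasSupportingEdges (k + 1) (rotateVertices (k + 2) (i + 1) v) :=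
    (HasSupportingEdges.rotate i hconv.2).congr fun j hj => (rotateVertices_removal v hi hj).symm
  refine IsConvexifiable.of_rotate (i + 1) <|
    isConvexifiable_of_openSegment_subset (by have := hsimple.1; omega) ?_ hbase
  rw [polygonInterior_rotateVertices, rotateVertices, rotateVertices, zero_add,
    show k + (i + 1) = i + (k + 2) - 1 by omega]
  exact hear
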